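/- arXiv:1708.01968 — 6 statements merged into one kernel-verified Lean document; each statement's English description precedes it below -/
import Mathlib

section
/- Let R be a countable commutative unital ring in which 2 is invertible, and let m be a positive integer such that every proper ideal of R has index at least m. Let G be a group generated by the images of four maps x_α, x_β, x_{α+β}, x_{α+2β} : R → G, each additive (x_γ(r+s) = x_γ(r)·x_γ(s) for all r, s ∈ R), satisfying for all r, s ∈ R the relations [x_α(r), x_β(s)] = x_{α+β}(rs)·x_{α+2β}(rs²) and [x_{α+β}(r), x_β(s)] = x_{α+2β}(2rs), and such that each of the pairs of families (x_α, x_{α+β}), (x_α, x_{α+2β}), (x_β, x_{α+2β}), (x_{α+β}, x_{α+2β}) commutes elementwise (so that H = x_{α+2β}(R) is central in G). Set X = x_α(R) and Y = x_β(R). Then every irreducible unitary representation V of G such that V^X ≠ 0, V^Y ≠ 0 and H acts nontrivially on V has complex dimension at least m (i.e., contains m linearly independent vectors). -/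
/-!
Only finite-dimensional `V` need an argument, and there the central subgroup `H` acts through
scalars by Schur's lemma. If `w` is fixed by `Y`, then each translate `x_{α+β}(a) w` is therefore a
common eigenvector of `Y`, on which `x_β(s)⁻¹` has the eigenvalue by which the commutator
`[x_{α+β}(a), x_β(s)] = x_{α+2β}(2as)` acts. Translates with different systems of eigenvalues are
linearly independent, and two systems agree exactly when the parameters are congruent modulo the
ideal of those `a` for which `x_{α+2β}(2aR)` acts trivially. This ideal is proper because `H` acts
nontrivially and `2` is invertible. Thus everything takes place in the Heisenberg group formed by
the root subgroups of `α + β`, `β` and `α + 2β`.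
-/

theorem linearIndependent_of_common_eigenvectors {K V ι S : Type*} [CommRing K] [IsDomain K]
    [AddCommGroup V] [Module K V] [Module.IsTorsionFree K V] {f : S → Module.End K V}
    {χ : ι → S → K} (hχ : Function.Injective χ) {v : ι → V} (hv_ne : ∀ i, v i ≠ 0)
    (hv : ∀ i s, f s (v i) = χ i s • v i) : LinearIndependent K v := by
  classical
  rw [linearIndependent_iff']
  intro t
  induction t using Finset.induction_on with
  | empty => simp
  | insert j t hjt ih =>
    intro g hg
    rw [Finset.sum_insert hjt] at hg
    have hsum (s : S) : ∑ i ∈ t, (g i * (χ i s - χ j s)) • v i = 0 := by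
      -- Apply `f s - χ j s`, which kills the `j`-th term of the relation.
      have hfs := congrArg (fun u ↦ f s u - χ j s • u) hg
      simp only [map_add, map_sum, map_smul, hv, smul_add, Finset.smul_sum, map_zero,
        smul_zero, sub_zero, smul_comm (χ j s) (g j) (v j), add_sub_add_left_eq_sub,
        ← Finset.sum_sub_distrib] at hfs
      rw [← hfs]
      exact Finset.sum_congr rfl fun i _ ↦ by module
    have hgt : ∀ i ∈ t, g i = 0 := by
      intro i hi
      obtain ⟨s, hs⟩ := Function.ne_iff.mp (hχ.ne (ne_of_mem_of_not_mem hi hjt))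
      exact (mul_eq_zero.mp (ih _ (hsum s) i hi)).resolve_right (sub_ne_zero.mpr hs)
    have hgj : g j = 0 := by
      rw [Finset.sum_eq_zero fun i hi ↦ by rw [hgt i hi, zero_smul], add_zero] at hg
      exact (smul_eq_zero.mp hg).resolve_right (hv_ne j)
    exact Finset.forall_mem_insert _ _ _ |>.mpr ⟨hgj, hgt⟩

theorem mem_center_of_closure_eq_top {G : Type*} [Group G] {S : Set G}
    (hS : Subgroup.closure S = ⊤) {z : G} (hz : ∀ g ∈ S, g * z = z * g) :
    z ∈ Subgroup.center G := by
  rw [← Subgroup.centralizer_univ, ← Subgroup.coe_top, ← hS, Subgroup.centralizer_closure]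
  exact Subgroup.mem_centralizer_iff.mpr hz

theorem mem_center_of_closure_range_eq_top {G ι₁ ι₂ ι₃ A : Type*} [Group G] [AddCommMagma A]
    {u : ι₁ → G} {v : ι₂ → G} {w : ι₃ → G} {z : A → G}
    (hgen : Subgroup.closure (Set.range u ∪ Set.range v ∪ Set.range w ∪ Set.range z) = ⊤)
    (hadd : ∀ s t, z (s + t) = z s * z t) (hu : ∀ i t, u i * z t = z t * u i)
    (hv : ∀ i t, v i * z t = z t * v i) (hw : ∀ i t, w i * z t = z t * w i) (t : A) :
    z t ∈ Subgroup.center G := by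
  refine mem_center_of_closure_eq_top hgen ?_
  rintro g (((⟨i, rfl⟩ | ⟨i, rfl⟩) | ⟨i, rfl⟩) | ⟨s, rfl⟩)
  · exact hu i t
  · exact hv i t
  · exact hw i t
  · rw [← hadd, ← hadd, add_comm]

section KernelCore

variable {R M N : Type*} [Semiring R] [Monoid N]

variable (R) in
/-- The largest `R`-submodule of `M` on which the additive character `ψ` is trivial. -/
def kernelCore [AddCommMonoid M] [Module R M] (ψ : AddChar M N) : Submodule R M where
  carrier := {a | ∀ s : R, ψ (s • a) = 1}
  add_mem' ha hb s := by rw [smul_add, AddChar.map_add_eq_mul, ha, hb, one_mul]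
  zero_mem' s := by rw [smul_zero, AddChar.map_zero_eq_one]
  smul_mem' r a ha s := by rw [smul_smul]; exact ha _

theorem sub_mem_kernelCore_of_forall_eq [AddCommGroup M] [Module R M] {ψ : AddChar M N}
    {a b : M} (h : ∀ s : R, ψ (s • a) = ψ (s • b)) : a - b ∈ kernelCore R ψ := fun s ↦ by
  rw [smul_sub, sub_eq_add_neg, AddChar.map_add_eq_mul, h, ← AddChar.map_add_eq_mul,
    add_neg_cancel, AddChar.map_zero_eq_one]

theorem kernelCore_ne_top [AddCommMonoid M] [Module R M] {ψ : AddChar M N} {a : M}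
    (ha : ψ a ≠ 1) : kernelCore R ψ ≠ ⊤ := by
  intro htop
  have hmem : a ∈ kernelCore R ψ := htop ▸ Submodule.mem_top
  exact ha (by simpa only [one_smul] using hmem 1)

end KernelCore

section Irreducible

variable {K G V : Type*} [Monoid G] [AddCommGroup V]

theorem exists_eq_algebraMap_of_mem_center [Field K] [IsAlgClosed K] [Module K V]
    [FiniteDimensional K V] (ρ : Representation K G V) [ρ.IsIrreducible] {z : G}
    (hz : z ∈ Submonoid.center G) : ∃ c : K, ρ z = algebraMap K (Module.End K V) c := by
  let T := Representation.IntertwiningMap.centralMul ρ z hz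
  obtain ⟨c, hc⟩ :=
    Representation.IsIrreducible.algebraMap_intertwiningMap_bijective_of_isAlgClosed.2 T
  exact ⟨c, (congrArg Representation.IntertwiningMap.toLinearMap hc).symm⟩

theorem isIrreducible_of_isClosed_eq_bot_or_top [NontriviallyNormedField K] [CompleteSpace K]
    [TopologicalSpace V] [IsTopologicalAddGroup V] [T2Space V] [Module K V] [ContinuousSMul K V]
    [FiniteDimensional K V] [Nontrivial V] {ρ : Representation K G V}
    (hirr : ∀ U : Submodule K V, IsClosed (U : Set V) →
      (∀ g, ∀ u ∈ U, ρ g u ∈ U) → U = ⊥ ∨ U = ⊤) : ρ.IsIrreducible where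
  exists_pair_ne := ⟨⊥, ⊤, fun h ↦ bot_ne_top (congrArg Subrepresentation.toSubmodule h)⟩
  eq_bot_or_eq_top U :=
    (hirr U.toSubmodule U.toSubmodule.closed_of_finiteDimensional U.apply_mem_toSubmodule).imp
      (fun h ↦ Subrepresentation.toSubmodule_injective h)
      (fun h ↦ Subrepresentation.toSubmodule_injective h)

end Irreducible

section Heisenberg

variable {K G V : Type*} [Group G]

theorem apply_inv_apply_of_commutator_eq_smul [CommSemiring K] [AddCommMonoid V] [Module K V]
    {ρ : Representation K G V} {x y : G} {w : V} {c : K} (hw : ρ y w = w)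
    (hc : ρ (x⁻¹ * y⁻¹ * x * y) w = c • w) : ρ y⁻¹ (ρ x w) = c • ρ x w := by
  calc ρ y⁻¹ (ρ x w) = ρ y⁻¹ (ρ x (ρ y w)) := by rw [hw]
    _ = ρ x (ρ (x⁻¹ * y⁻¹ * x * y) w) := by
      simp only [← Module.End.mul_apply, ← map_mul]
      group
    _ = c • ρ x w := by rw [hc, map_smul]

theorem linearIndependent_translates_of_commutator_eq [CommRing K] [IsDomain K] [AddCommGroup V]
    [Module K V] [Module.IsTorsionFree K V] {R M : Type*} [Ring R] [AddCommGroup M]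
    [Module R M] {ρ : Representation K G V} {x : M → G} {y : R → G} {z : AddChar M G}
    (hxy : ∀ a s, (x a)⁻¹ * (y s)⁻¹ * x a * y s = z (s • a))
    (hz : ∀ a, ∃ c : K, ρ (z a) = algebraMap K (Module.End K V) c)
    {w : V} (hw_ne : w ≠ 0) (hw : ∀ s, ρ (y s) w = w) :
    LinearIndependent K fun q : M ⧸ kernelCore R (ρ.compAddChar z) ↦ ρ (x q.out) w := by
  choose c hc using hz
  refine linearIndependent_of_common_eigenvectors (f := fun s ↦ ρ (y s)⁻¹)
    (χ := fun q s ↦ c (s • q.out)) ?_ ?_ ?_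
  · intro p q hpq
    have hsub : p.out - q.out ∈ kernelCore R (ρ.compAddChar z) :=
      sub_mem_kernelCore_of_forall_eq fun s ↦ by
        simpa only [MonoidHom.coe_compAddChar, Function.comp_apply, hc] using
          congrArg (algebraMap K (Module.End K V)) (congrFun hpq s)
    have hmk := (Submodule.Quotient.eq _).mpr hsub
    rwa [← Submodule.Quotient.mk_out p, ← Submodule.Quotient.mk_out q]
  · intro q
    exact (map_ne_zero_iff _ (ρ.apply_bijective _).injective).mpr hw_ne
  · intro q s
    refine apply_inv_apply_of_commutator_eq_smul (hw s) ?_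
    rw [hxy, hc, Module.algebraMap_end_apply]

variable [NontriviallyNormedField K] [CompleteSpace K] [IsAlgClosed K] [AddCommGroup V]
  [TopologicalSpace V] [IsTopologicalAddGroup V] [T2Space V] [Module K V] [ContinuousSMul K V]

theorem exists_linearIndependent_of_heisenberg_commutator {R M : Type*} [Ring R] [AddCommGroup M]
    [Module R M] {m : ℕ}
    (hindex : ∀ N : Submodule R M, N ≠ ⊤ → (m : Cardinal) ≤ Cardinal.mk (M ⧸ N))
    {x : M → G} {y : R → G} {z : AddChar M G}
    (hxy : ∀ a s, (x a)⁻¹ * (y s)⁻¹ * x a * y s = z (s • a))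
    (hz : ∀ a, z a ∈ Subgroup.center G) {ρ : Representation K G V}
    (hirr : ∀ U : Submodule K V, IsClosed (U : Set V) →
      (∀ g, ∀ u ∈ U, ρ g u ∈ U) → U = ⊥ ∨ U = ⊤)
    (hY : ∃ w : V, w ≠ 0 ∧ ∀ s, ρ (y s) w = w) (hH : ∃ a v, ρ (z a) v ≠ v) :
    ∃ f : Fin m → V, LinearIndependent K f := by
  by_cases hfin : FiniteDimensional K V
  · obtain ⟨w, hw_ne, hw⟩ := hY
    obtain ⟨a, v, hav⟩ := hH
    have : Nontrivial V := ⟨w, 0, hw_ne⟩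
    have : ρ.IsIrreducible := isIrreducible_of_isClosed_eq_bot_or_top hirr
    have hproper : kernelCore R (ρ.compAddChar z) ≠ ⊤ :=
      kernelCore_ne_top (a := a) fun h ↦ hav (LinearMap.congr_fun h v)
    obtain ⟨e⟩ : Nonempty (Fin m ↪ M ⧸ kernelCore R (ρ.compAddChar z)) := by
      rw [← Cardinal.lift_mk_le']
      simpa using hindex _ hproper
    have hind := linearIndependent_translates_of_commutator_eq hxy
      (fun a ↦ exists_eq_algebraMap_of_mem_center ρ (hz a)) hw_ne hw
    exact ⟨_, hind.comp e e.injective⟩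
  · have hrank : Cardinal.aleph0 ≤ Module.rank K V :=
      not_lt.mp (mt Module.rank_lt_aleph0_iff.mp hfin)
    exact exists_linearIndependent_of_le_rank (Cardinal.natCast_le_aleph0.trans hrank)

theorem stmt_2_general {R : Type*} [CommRing R] (h2 : IsUnit (2 : R)) {m : ℕ}
    (hIdeals : ∀ I : Ideal R, I ≠ ⊤ → (m : Cardinal) ≤ Cardinal.mk (R ⧸ I))
    {xb xab xa2b : R → G}
    (haddA2B : ∀ r s, xa2b (r + s) = xa2b r * xa2b s)
    (hcenter : ∀ r, xa2b r ∈ Subgroup.center G)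
    (hrel : ∀ r s, (xab r)⁻¹ * (xb s)⁻¹ * xab r * xb s = xa2b (2 * r * s))
    {ρ : Representation K G V}
    (hirr : ∀ U : Submodule K V, IsClosed (U : Set V) →
      (∀ g, ∀ u ∈ U, ρ g u ∈ U) → U = ⊥ ∨ U = ⊤)
    (hY : ∃ w : V, w ≠ 0 ∧ ∀ r, ρ (xb r) w = w) (hH : ∃ r v, ρ (xa2b r) v ≠ v) :
    ∃ f : Fin m → V, LinearIndependent K f := by
  let z : AddChar R G :=
    { toFun := fun t ↦ xa2b (2 * t)
      map_zero_eq_one' := by simpa using haddA2B 0 0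
      map_add_eq_mul' := fun s t ↦ by rw [mul_add, haddA2B] }
  have hxy (r s : R) : (xab r)⁻¹ * (xb s)⁻¹ * xab r * xb s = z (s • r) := by
    rw [hrel, mul_assoc, mul_comm r s]
    rfl
  have hz : ∃ t v, ρ (z t) v ≠ v := by
    obtain ⟨r, v, hrv⟩ := hH
    obtain ⟨t, rfl⟩ := h2.dvd (a := r)
    exact ⟨t, v, hrv⟩
  exact exists_linearIndependent_of_heisenberg_commutator hIdeals hxy (fun t ↦ hcenter _) hirr hY hz

end Heisenberg

/-- The linear representation underlying an action by linear isometries. -/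
def representationOfIsometries {K G V : Type*} [Semiring K] [Monoid G] [SeminormedAddCommGroup V]
    [Module K V] (π : G →* (V ≃ₗᵢ[K] V)) : Representation K G V where
  toFun g := (π g).toLinearEquiv
  map_one' := by rw [map_one]; rfl
  map_mul' g h := by rw [map_mul]; rfl

/-- Lemma 4.2(b), case B₂. -/
theorem stmt_2 (R : Type) [CommRing R] [Countable R]
    (h2 : IsUnit (2 : R))
    (m : ℕ) (hm : 0 < m)
    (hIdeals : ∀ I : Ideal R, I ≠ ⊤ → (m : Cardinal) ≤ Cardinal.mk (R ⧸ I))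
    (G : Type) [Group G]
    (xa xb xab xa2b : R → G)
    (haddA : ∀ r s : R, xa (r + s) = xa r * xa s)
    (haddB : ∀ r s : R, xb (r + s) = xb r * xb s)
    (haddAB : ∀ r s : R, xab (r + s) = xab r * xab s)
    (haddA2B : ∀ r s : R, xa2b (r + s) = xa2b r * xa2b s)
    (hgen : Subgroup.closure
      (Set.range xa ∪ Set.range xb ∪ Set.range xab ∪ Set.range xa2b) = ⊤)
    -- [x_α(r), x_β(s)] = x_{α+β}(rs)·x_{α+2β}(rs²)
    (hrel1 : ∀ r s : R,
      (xa r)⁻¹ * (xb s)⁻¹ * xa r * xb s = xab (r * s) * xa2b (r * s ^ 2))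
    -- [x_{α+β}(r), x_β(s)] = x_{α+2β}(2rs)
    (hrel2 : ∀ r s : R,
      (xab r)⁻¹ * (xb s)⁻¹ * xab r * xb s = xa2b (2 * r * s))
    -- the pairs (x_α, x_{α+β}), (x_α, x_{α+2β}), (x_β, x_{α+2β}), (x_{α+β}, x_{α+2β})
    -- commute elementwise
    (hc1 : ∀ r s : R, xa r * xab s = xab s * xa r)
    (hc2 : ∀ r s : R, xa r * xa2b s = xa2b s * xa r)
    (hc3 : ∀ r s : R, xb r * xa2b s = xa2b s * xb r)
    (hc4 : ∀ r s : R, xab r * xa2b s = xa2b s * xab r)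
    (V : Type) [NormedAddCommGroup V] [InnerProductSpace ℂ V] [CompleteSpace V]
    (π : G →* (V ≃ₗᵢ[ℂ] V))
    (hnt : Nontrivial V)
    (hirr : ∀ U : Submodule ℂ V, IsClosed (U : Set V) →
      (∀ g : G, ∀ u ∈ U, π g u ∈ U) → U = ⊥ ∨ U = ⊤)
    -- V^X ≠ 0 with X = x_α(R)
    (hX : ∃ v : V, v ≠ 0 ∧ ∀ r : R, π (xa r) v = v)
    -- V^Y ≠ 0 with Y = x_β(R)
    (hY : ∃ w : V, w ≠ 0 ∧ ∀ r : R, π (xb r) w = w)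
    -- H = x_{α+2β}(R) acts nontrivially on V
    (hH : ∃ (r : R) (v : V), π (xa2b r) v ≠ v) :
    ∃ f : Fin m → V, LinearIndependent ℂ f := by
  exact stmt_2_general h2 hIdeals haddA2B
    (mem_center_of_closure_range_eq_top hgen haddA2B hc2 hc3 hc4) hrel2
    (ρ := representationOfIsometries π) hirr hY hH
end

section
/- Let R be a countable commutative unital ring in which 3 is invertible, and let m be a positive integer such that every proper ideal of R has index at least m. Let G be a group generated by the images of six additive maps x_α, x_β, x_{α+β}, x_{α+2β}, x_{α+3β}, x_{2α+3β} : R → G (x_γ(r+s) = x_γ(r)·x_γ(s) for all r, s ∈ R), satisfying for all r, s ∈ R the relations: [x_α(r), x_β(s)] = x_{α+β}(rs)·x_{α+2β}(rs²)·x_{α+3β}(rs³)·x_{2α+3β}(r²s³); [x_{α+β}(r), x_β(s)] = x_{α+2β}(2rs)·x_{α+3β}(3rs²)·x_{2α+3β}(3r²s); [x_{α+2β}(r), x_β(s)] = x_{α+3β}(3rs); [x_{α+2β}(r), x_{α+β}(s)] = x_{2α+3β}(3rs); [x_{α+3β}(r), x_α(s)] = x_{2α+3β}(−rs); and such that all other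 pairs of the six families commute elementwise (in particular x_{2α+3β}(R) is central in G, and x_{α+3β}(R) and x_{2α+3β}(R) commute, so H = x_{α+3β}(R)·x_{2α+3β}(R) is a subgroup). Set X = x_α(R) and Y = x_β(R). Then every irreducible unitary representation V of G such that V^X ≠ 0, V^Y ≠ 0 and H acts nontrivially on V has complex dimension at least m (i.e., contains m linearly independent vectors). -/
/-!
If a vector `v` is fixed by a family `y` and the commutators `[x r, y s]` act by the scalars
`χ (r * s)` of a nontrivial additive character `χ`, then `y s` multiplies `x r • v` by
`χ (-(r * s))`.  The elements `r` for which this eigencharacter is trivial form a proper ideal `I`,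
so the vectors `x r • v`, for `r` in a transversal of `R ⧸ I`, belong to distinct characters and are
linearly independent.

In finite dimension, Schur's lemma supplies the character `χ` whenever the commutators are central.
If the subgroup of the highest root `2α + 3β` acts nontrivially, the commutators
`[x_{α+3β}, x_α]` and a vector fixed by `X` conclude.  Otherwise the subgroup of `α + 3β` becomes
central in the image, it acts nontrivially, and the commutators `[x_{α+2β}, x_β]` and a vector fixed
by `Y` conclude.
-/

open Module Cardinal

section LinearIndependence

variable {K V : Type*} [Field K] [AddCommGroup V] [Module K V]

theorem linearIndependent_of_forall_apply_eq_character_smul {M ι : Type*} [Monoid M]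
    (f : M → End K V) {χ : ι → M →* K} (hχ : Function.Injective χ) {v : ι → V}
    (hv : ∀ i, v i ≠ 0) (hf : ∀ s i, f s (v i) = χ i s • v i) : LinearIndependent K v := by
  have characters_indep := (linearIndependent_monoidHom M K).comp χ hχ
  rw [linearIndependent_iff'] at characters_indep ⊢
  intro t c hc i hi
  obtain ⟨φ, hφ⟩ := Projective.exists_dual_ne_zero K (hv i)
  have character_relation : ∑ j ∈ t, (c j * φ (v j)) • (χ j : M → K) = 0 := by
    ext s
    have := congrArg (fun w ↦ φ (f s w)) hc
    simpa [hf, mul_assoc, mul_left_comm, mul_comm] using this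
  exact (mul_eq_zero.1 (characters_indep t _ character_relation i hi)).resolve_right hφ

end LinearIndependence

section MulShift

variable {R M : Type*} [CommRing R] [CommMonoid M]

/-- The elements `r` of `R` such that `χ` is trivial on the principal ideal `r R`, that is, the
largest ideal on which the additive character `χ` is trivial. -/
def mulShiftKer (χ : AddChar R M) : Ideal R where
  carrier := {r | χ.mulShift r = 1}
  zero_mem' := χ.mulShift_zero
  add_mem' {r s} hr hs := by
    rw [Set.mem_ofPred_eq, ← χ.mulShift_mul, hr, hs, one_mul]
  smul_mem' a r hr := by
    ext s
    simpa [mul_left_comm, mul_assoc] using DFunLike.congr_fun hr (a * s)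

theorem mem_mulShiftKer {χ : AddChar R M} {r : R} : r ∈ mulShiftKer χ ↔ χ.mulShift r = 1 :=
  Iff.rfl

theorem mulShiftKer_ne_top {χ : AddChar R M} (hχ : χ ≠ 1) : mulShiftKer χ ≠ ⊤ := by
  rwa [Ideal.ne_top_iff_one, mem_mulShiftKer, AddChar.mulShift_one]

theorem sub_mem_mulShiftKer {χ : AddChar R M} {r s : R} :
    r - s ∈ mulShiftKer χ ↔ χ.mulShift r = χ.mulShift s := by
  rw [mem_mulShiftKer, ← mul_left_inj (χ.mulShift s), χ.mulShift_mul, sub_add_cancel, one_mul]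

end MulShift

section Commutators

theorem commute_of_map_add {A M : Type*} [AddCommMagma A] [Mul M] {f : A → M}
    (hf : ∀ a b, f (a + b) = f a * f b) (a b : A) : Commute (f a) (f b) := by
  rw [commute_iff_eq, ← hf, ← hf, add_comm]

variable {G M : Type*} [Group G] [Monoid M]

theorem commute_map_of_map_commutator_eq_one (f : G →* M) {g h : G}
    (hgh : f (g⁻¹ * h⁻¹ * g * h) = 1) : Commute (f g) (f h) := by
  have : g * h = h * g * (g⁻¹ * h⁻¹ * g * h) := by group
  rw [commute_iff_eq, ← map_mul, this, map_mul, hgh, mul_one, map_mul]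

theorem commute_map_of_closure_eq_top (f : G →* M) {S : Set G} (hS : Subgroup.closure S = ⊤)
    {t : M} (ht : ∀ g ∈ S, Commute t (f g)) (g : G) : Commute t (f g) := by
  have hg : g ∈ Subgroup.closure S := hS ▸ Subgroup.mem_top g
  induction hg using Subgroup.closure_induction with
  | mem g hg => exact ht g hg
  | one => simp
  | mul g h _ _ hg hh => simpa using hg.mul_right hh
  | inv g _ hg => exact Commute.units_inv_right (u := f.toHomUnits g) hg

end Commutators

section CommutatorCharacters

universe u w

variable {R : Type u} {K : Type*} {V : Type w} [CommRing R] [Field K] [AddCommGroup V] [Module K V]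

theorem lift_mk_quotient_mulShiftKer_le_lift_rank {χ : AddChar R K} (f : R → End K V) {v : R → V}
    (hv : ∀ r, v r ≠ 0) (hf : ∀ r s, f s (v r) = χ (r * s) • v r) :
    lift.{w} #(R ⧸ mulShiftKer χ) ≤ lift.{u} (Module.rank K V) := by
  let eigencharacter (q : R ⧸ mulShiftKer χ) : Multiplicative R →* K :=
    (χ.mulShift q.out).toMonoidHom
  have eigencharacter_injective : Function.Injective eigencharacter := fun p q hpq ↦ by
    rw [← Ideal.Quotient.mk_out p, ← Ideal.Quotient.mk_out q, Ideal.Quotient.eq,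
      sub_mem_mulShiftKer]
    exact AddChar.toMonoidHomEquiv.injective hpq
  exact (linearIndependent_of_forall_apply_eq_character_smul (fun s ↦ f s.toAdd)
    eigencharacter_injective (fun q ↦ hv q.out)
    fun s q ↦ hf q.out s.toAdd).cardinal_lift_le_rank

variable {G : Type*} [Group G]

theorem smul_apply_apply_of_commutator_eq_algebraMap (ρ : Representation K G V) {g h : G} {c : K}
    (hgh : ρ (g⁻¹ * h⁻¹ * g * h) = algebraMap K (End K V) c) {v : V} (hv : ρ h v = v) :
    c • ρ h (ρ g v) = ρ g v := by
  have hswap : g * h = h * g * (g⁻¹ * h⁻¹ * g * h) := by group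
  have hswap_v := congrArg (ρ · v) hswap
  rw [map_mul, map_mul ρ _ (g⁻¹ * h⁻¹ * g * h), hgh] at hswap_v
  simpa [hv] using hswap_v.symm

theorem lift_mk_quotient_le_lift_rank_of_commutator_eq_addChar (ρ : Representation K G V)
    {x y : R → G} {χ : AddChar R K}
    (hcomm : ∀ r s, ρ ((x r)⁻¹ * (y s)⁻¹ * x r * y s) = algebraMap K (End K V) (χ (r * s)))
    {v : V} (hv : v ≠ 0) (hy : ∀ s, ρ (y s) v = v) :
    lift.{w} #(R ⧸ mulShiftKer χ⁻¹) ≤ lift.{u} (Module.rank K V) := by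
  refine lift_mk_quotient_mulShiftKer_le_lift_rank (fun s ↦ ρ (y s)) (v := fun r ↦ ρ (x r) v)
    (fun r ↦ (ρ.apply_bijective (x r)).injective.ne_iff' (map_zero _) |>.2 hv) fun r s ↦ ?_
  rw [AddChar.inv_apply', eq_inv_smul_iff₀ (χ.val_isUnit _).ne_zero]
  exact smul_apply_apply_of_commutator_eq_algebraMap ρ (hcomm r s) (hy s)

end CommutatorCharacters

section Irreducible

theorem exists_addChar_of_commute {K V G A : Type*} [Field K] [IsAlgClosed K] [AddCommGroup V]
    [Module K V] [FiniteDimensional K V] [Monoid G] [AddMonoid A] (ρ : Representation K G V)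
    [ρ.IsIrreducible] (T : AddChar A (End K V)) (hT : ∀ a g, Commute (T a) (ρ g)) :
    ∃ χ : AddChar A K, ∀ a, T a = algebraMap K (End K V) (χ a) := by
  have : Nontrivial V := IsSimpleModule.nontrivial (MonoidAlgebra K G) ρ.asModule
  have exists_scalar (a : A) : ∃ c, algebraMap K (End K V) c = T a := by
    let intertwiner := (T a).intertwiningMap_of_isIntertwiningMap ρ ρ
      fun g ↦ LinearMap.congr_fun (hT a g)
    obtain ⟨c, hc⟩ :=
      Representation.IsIrreducible.algebraMap_intertwiningMap_bijective_of_isAlgClosed.2 intertwiner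
    exact ⟨c, congrArg Representation.IntertwiningMap.toLinearMap hc⟩
  choose χ hχ using exists_scalar
  refine ⟨⟨χ, ?_, fun a b ↦ ?_⟩, fun a ↦ (hχ a).symm⟩ <;>
    apply (algebraMap K (End K V)).injective
  · rw [hχ, T.map_zero_eq_one, map_one]
  · rw [hχ, T.map_add_eq_mul, map_mul, hχ, hχ]

variable {𝕜 V G : Type*} [NontriviallyNormedField 𝕜] [AddCommGroup V]
  [Module 𝕜 V] [TopologicalSpace V]

/-- Irreducibility of a representation on a topological vector space: `V` is nonzero, and only the
*closed* invariant subspaces are required to be trivial.  No continuity of the operators `ρ g` is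
imposed. -/
def IsTopologicallyIrreducible [Monoid G] (ρ : Representation 𝕜 G V) : Prop :=
  Nontrivial V ∧ ∀ U : Submodule 𝕜 V, IsClosed (U : Set V) →
    (∀ g, ∀ u ∈ U, ρ g u ∈ U) → U = ⊥ ∨ U = ⊤

variable [IsTopologicalAddGroup V] [ContinuousSMul 𝕜 V] [T2Space V] [CompleteSpace 𝕜]

theorem IsTopologicallyIrreducible.isIrreducible [FiniteDimensional 𝕜 V] [Monoid G]
    {ρ : Representation 𝕜 G V} (hρ : IsTopologicallyIrreducible ρ) : ρ.IsIrreducible := by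
  obtain ⟨_, closed_invariant⟩ := hρ
  refine { exists_pair_ne := ⟨⊥, ⊤, ?_⟩, eq_bot_or_eq_top := fun U ↦ ?_ }
  · exact fun h ↦ bot_ne_top (congrArg Subrepresentation.toSubmodule h)
  · exact (closed_invariant U.toSubmodule (Submodule.closed_of_finiteDimensional _)
      U.apply_mem_toSubmodule).imp
      (fun h ↦ Subrepresentation.toSubmodule_injective h)
      fun h ↦ Subrepresentation.toSubmodule_injective h

variable {R : Type*} [CommRing R] [Group G] [IsAlgClosed 𝕜] {ρ : Representation 𝕜 G V} {m : ℕ}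

theorem natCast_le_rank_of_central_commutators (hρ : IsTopologicallyIrreducible ρ)
    (hR : ∀ I : Ideal R, I ≠ ⊤ → (m : Cardinal) ≤ #(R ⧸ I))
    {z : R → G} (hz_add : ∀ r s, z (r + s) = z r * z s)
    (hz_comm : ∀ r g, Commute (ρ (z r)) (ρ g)) (hz_ne : ∃ r, ρ (z r) ≠ 1)
    {u : R} (hu : IsUnit u) {x y : R → G}
    (hcomm : ∀ r s, (x r)⁻¹ * (y s)⁻¹ * x r * y s = z (u * r * s))
    (hy : ∃ v : V, v ≠ 0 ∧ ∀ s, ρ (y s) v = v) :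
    (m : Cardinal) ≤ Module.rank 𝕜 V := by
  by_cases hfin : FiniteDimensional 𝕜 V
  · have := hρ.isIrreducible
    let Z : AddChar R G := AddChar.toMonoidHomEquiv.symm
      (MonoidHom.mk' (fun r ↦ z r.toAdd) fun r s ↦ hz_add r.toAdd s.toAdd)
    obtain ⟨χ, hχ⟩ := exists_addChar_of_commute ρ (ρ.compAddChar Z) hz_comm
    have hz (r : R) : ρ (z r) = algebraMap 𝕜 (End 𝕜 V) (χ r) := hχ r
    have χ_ne_one : χ ≠ 1 := by
      obtain ⟨r, hr⟩ := hz_ne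
      exact AddChar.ne_one_iff.2 ⟨r, fun h ↦ hr (by rw [hz, h, map_one])⟩
    have shift_ne_one : χ.mulShift u ≠ 1 := mt (χ.mulShift_unit_eq_one_iff hu).1 χ_ne_one
    obtain ⟨v, hv, hyv⟩ := hy
    have rank_bound := lift_mk_quotient_le_lift_rank_of_commutator_eq_addChar ρ
      (χ := χ.mulShift u) (fun r s ↦ by rw [hcomm, hz, AddChar.mulShift_apply, mul_assoc]) hv hyv
    exact nat_le_lift_iff.1 <|
      (nat_le_lift_iff.2 (hR _ (mulShiftKer_ne_top (inv_ne_one.2 shift_ne_one)))).trans rank_bound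
  · exact natCast_le_aleph0.trans (not_lt.1 (mt Module.rank_lt_aleph0_iff.1 hfin))

theorem stmt_3_general (hρ : IsTopologicallyIrreducible ρ) (h3 : IsUnit (3 : R))
    (hIdeals : ∀ I : Ideal R, I ≠ ⊤ → (m : Cardinal) ≤ #(R ⧸ I))
    {xa xb xab xa2b xa3b x2a3b : R → G}
    (haddA3B : ∀ r s : R, xa3b (r + s) = xa3b r * xa3b s)
    (hadd2A3B : ∀ r s : R, x2a3b (r + s) = x2a3b r * x2a3b s)
    (hgen : Subgroup.closure
      (Set.range xa ∪ Set.range xb ∪ Set.range xab ∪ Set.range xa2b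
        ∪ Set.range xa3b ∪ Set.range x2a3b) = ⊤)
    (hrel3 : ∀ r s : R, (xa2b r)⁻¹ * (xb s)⁻¹ * xa2b r * xb s = xa3b (3 * r * s))
    (hrel5 : ∀ r s : R, (xa3b r)⁻¹ * (xa s)⁻¹ * xa3b r * xa s = x2a3b (-(r * s)))
    (hc3 : ∀ r s : R, xa r * x2a3b s = x2a3b s * xa r)
    (hc4 : ∀ r s : R, xb r * xa3b s = xa3b s * xb r)
    (hc5 : ∀ r s : R, xb r * x2a3b s = x2a3b s * xb r)
    (hc6 : ∀ r s : R, xab r * xa3b s = xa3b s * xab r)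
    (hc7 : ∀ r s : R, xab r * x2a3b s = x2a3b s * xab r)
    (hc8 : ∀ r s : R, xa2b r * xa3b s = xa3b s * xa2b r)
    (hc9 : ∀ r s : R, xa2b r * x2a3b s = x2a3b s * xa2b r)
    (hc10 : ∀ r s : R, xa3b r * x2a3b s = x2a3b s * xa3b r)
    (hX : ∃ v : V, v ≠ 0 ∧ ∀ r : R, ρ (xa r) v = v)
    (hY : ∃ w : V, w ≠ 0 ∧ ∀ r : R, ρ (xb r) w = w)
    (hH : ∃ (r s : R) (v : V), ρ (xa3b r * x2a3b s) v ≠ v) :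
    (m : Cardinal) ≤ Module.rank 𝕜 V := by
  by_cases hZ : ∃ r, ρ (x2a3b r) ≠ 1
  · have central (r : R) : ∀ g, Commute (ρ (x2a3b r)) (ρ g) := by
      refine commute_map_of_closure_eq_top ρ hgen ?_
      rintro _ (((((⟨s, rfl⟩ | ⟨s, rfl⟩) | ⟨s, rfl⟩) | ⟨s, rfl⟩) | ⟨s, rfl⟩) | ⟨s, rfl⟩)
      exacts [.map (hc3 s r).symm ρ, .map (hc5 s r).symm ρ, .map (hc7 s r).symm ρ,
        .map (hc9 s r).symm ρ, .map (hc10 s r).symm ρ, .map (commute_of_map_add hadd2A3B r s) ρ]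
    exact natCast_le_rank_of_central_commutators hρ hIdeals hadd2A3B central hZ isUnit_one.neg
      (by simpa using hrel5) hX
  · push Not at hZ
    have central (r : R) : ∀ g, Commute (ρ (xa3b r)) (ρ g) := by
      refine commute_map_of_closure_eq_top ρ hgen ?_
      rintro _ (((((⟨s, rfl⟩ | ⟨s, rfl⟩) | ⟨s, rfl⟩) | ⟨s, rfl⟩) | ⟨s, rfl⟩) | ⟨s, rfl⟩)
      exacts [commute_map_of_map_commutator_eq_one ρ (by rw [hrel5, hZ]), .map (hc4 s r).symm ρ,
        .map (hc6 s r).symm ρ, .map (hc8 s r).symm ρ, .map (commute_of_map_add haddA3B r s) ρ,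
        .map (hc10 r s) ρ]
    have nontrivial : ∃ r, ρ (xa3b r) ≠ 1 := by
      obtain ⟨r, s, v, hv⟩ := hH
      exact ⟨r, fun h ↦ hv (by rw [map_mul, h, hZ, one_mul, End.one_apply])⟩
    exact natCast_le_rank_of_central_commutators hρ hIdeals haddA3B central nontrivial h3 hrel3 hY

end Irreducible

/-- The representation by linear maps underlying a representation by unitary operators. -/
def linearRepresentation {𝕜 V G : Type*} [NormedField 𝕜] [NormedAddCommGroup V] [NormedSpace 𝕜 V]
    [Monoid G] (π : G →* (V ≃ₗᵢ[𝕜] V)) : Representation 𝕜 G V where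
  toFun g := (π g).toLinearEquiv
  map_one' := by ext; simp
  map_mul' g h := by ext; simp

/-- Lemma 4.2(c), case G₂. -/
theorem stmt_3 (R : Type) [CommRing R] [Countable R]
    (h3 : IsUnit (3 : R))
    (m : ℕ) (hm : 0 < m)
    (hIdeals : ∀ I : Ideal R, I ≠ ⊤ → (m : Cardinal) ≤ Cardinal.mk (R ⧸ I))
    (G : Type) [Group G]
    (xa xb xab xa2b xa3b x2a3b : R → G)
    (haddA : ∀ r s : R, xa (r + s) = xa r * xa s)
    (haddB : ∀ r s : R, xb (r + s) = xb r * xb s)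
    (haddAB : ∀ r s : R, xab (r + s) = xab r * xab s)
    (haddA2B : ∀ r s : R, xa2b (r + s) = xa2b r * xa2b s)
    (haddA3B : ∀ r s : R, xa3b (r + s) = xa3b r * xa3b s)
    (hadd2A3B : ∀ r s : R, x2a3b (r + s) = x2a3b r * x2a3b s)
    (hgen : Subgroup.closure
      (Set.range xa ∪ Set.range xb ∪ Set.range xab ∪ Set.range xa2b
        ∪ Set.range xa3b ∪ Set.range x2a3b) = ⊤)
    -- [x_α(r), x_β(s)] = x_{α+β}(rs)·x_{α+2β}(rs²)·x_{α+3β}(rs³)·x_{2α+3β}(r²s³)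
    (hrel1 : ∀ r s : R, (xa r)⁻¹ * (xb s)⁻¹ * xa r * xb s
      = xab (r * s) * xa2b (r * s ^ 2) * xa3b (r * s ^ 3) * x2a3b (r ^ 2 * s ^ 3))
    -- [x_{α+β}(r), x_β(s)] = x_{α+2β}(2rs)·x_{α+3β}(3rs²)·x_{2α+3β}(3r²s)
    (hrel2 : ∀ r s : R, (xab r)⁻¹ * (xb s)⁻¹ * xab r * xb s
      = xa2b (2 * r * s) * xa3b (3 * r * s ^ 2) * x2a3b (3 * r ^ 2 * s))
    -- [x_{α+2β}(r), x_β(s)] = x_{α+3β}(3rs)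
    (hrel3 : ∀ r s : R, (xa2b r)⁻¹ * (xb s)⁻¹ * xa2b r * xb s = xa3b (3 * r * s))
    -- [x_{α+2β}(r), x_{α+β}(s)] = x_{2α+3β}(3rs)
    (hrel4 : ∀ r s : R, (xa2b r)⁻¹ * (xab s)⁻¹ * xa2b r * xab s = x2a3b (3 * r * s))
    -- [x_{α+3β}(r), x_α(s)] = x_{2α+3β}(−rs)
    (hrel5 : ∀ r s : R, (xa3b r)⁻¹ * (xa s)⁻¹ * xa3b r * xa s = x2a3b (-(r * s)))
    -- all other pairs of the six families commute elementwise
    (hc1 : ∀ r s : R, xa r * xab s = xab s * xa r)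
    (hc2 : ∀ r s : R, xa r * xa2b s = xa2b s * xa r)
    (hc3 : ∀ r s : R, xa r * x2a3b s = x2a3b s * xa r)
    (hc4 : ∀ r s : R, xb r * xa3b s = xa3b s * xb r)
    (hc5 : ∀ r s : R, xb r * x2a3b s = x2a3b s * xb r)
    (hc6 : ∀ r s : R, xab r * xa3b s = xa3b s * xab r)
    (hc7 : ∀ r s : R, xab r * x2a3b s = x2a3b s * xab r)
    (hc8 : ∀ r s : R, xa2b r * xa3b s = xa3b s * xa2b r)
    (hc9 : ∀ r s : R, xa2b r * x2a3b s = x2a3b s * xa2b r)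
    (hc10 : ∀ r s : R, xa3b r * x2a3b s = x2a3b s * xa3b r)
    (V : Type) [NormedAddCommGroup V] [InnerProductSpace ℂ V] [CompleteSpace V]
    (π : G →* (V ≃ₗᵢ[ℂ] V))
    (hnt : Nontrivial V)
    (hirr : ∀ U : Submodule ℂ V, IsClosed (U : Set V) →
      (∀ g : G, ∀ u ∈ U, π g u ∈ U) → U = ⊥ ∨ U = ⊤)
    -- V^X ≠ 0 with X = x_α(R)
    (hX : ∃ v : V, v ≠ 0 ∧ ∀ r : R, π (xa r) v = v)
    -- V^Y ≠ 0 with Y = x_β(R)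
    (hY : ∃ w : V, w ≠ 0 ∧ ∀ r : R, π (xb r) w = w)
    -- H = x_{α+3β}(R)·x_{2α+3β}(R) acts nontrivially on V
    (hH : ∃ (r s : R) (v : V), π (xa3b r * x2a3b s) v ≠ v) :
    ∃ f : Fin m → V, LinearIndependent ℂ f := by
  exact Module.le_rank_iff.1 <|
    stmt_3_general (ρ := linearRepresentation π) ⟨hnt, hirr⟩ h3 hIdeals haddA3B hadd2A3B hgen
      hrel3 hrel5 hc3 hc4 hc5 hc6 hc7 hc8 hc9 hc10 hX hY hH
end

section
/- For every integer n ≥ 2, the subring ℤ[i, 1/n!] of ℂ (the smallest subring of ℂ containing the imaginary unit i and 1/n!) is dense in ℂ, and every proper ideal I of ℤ[i, 1/n!] satisfies card(ℤ[i, 1/n!]/I) > n; in particular, ℤ[i, 1/n!] is a finitely generated ring with no proper ideals of index at most n. -/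
/-!
Density: the real numbers in `ℤ[i, 1/n!]` form a ring containing the powers of `1/n!`, which are
arbitrarily small, so they are dense in `ℝ`; since `i` is available, approximating the real and the
imaginary part separately gives density in `ℂ`.

Index: a nonzero quotient with at most `n` elements would have order dividing `n!`, hence would be
annihilated by `n!`, which is a unit of `ℤ[i, 1/n!]`.
-/

open scoped Nat Cardinal

theorem dense_subring_of_mem_Ioo_zero_one {K : Type*} [Field K] [LinearOrder K]
    [IsStrictOrderedRing K] [Archimedean K] [TopologicalSpace K] [OrderTopology K]
    {S : Subring K} {r : K} (hrS : r ∈ S) (hr : r ∈ Set.Ioo 0 1) : Dense (S : Set K) := by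
  refine S.toAddSubgroup.dense_of_not_isolated_zero fun ε hε ↦ ?_
  obtain ⟨k, hk⟩ := exists_pow_lt_of_lt_one hε hr.2
  exact ⟨r ^ k, pow_mem hrS k, pow_pos hr.1 k, hk⟩

theorem dense_subring_of_dense_comap_ofReal {S : Subring ℂ} (hI : Complex.I ∈ S)
    (hS : Dense (S.comap Complex.ofRealHom : Set ℝ)) : Dense (S : Set ℂ) := by
  have dense_image := Complex.equivRealProdCLM.symm.surjective.denseRange.dense_image
    Complex.equivRealProdCLM.symm.continuous (hS.prod hS)
  refine dense_image.mono ?_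
  rintro _ ⟨⟨x, y⟩, ⟨hx, hy⟩, rfl⟩
  rw [Complex.equivRealProdCLM_symm_apply]
  exact add_mem hx (mul_mem hy hI)

theorem natCast_lt_mk_of_isUnit_factorial {R M : Type*} [Semiring R] [AddCommGroup M] [Module R M]
    [Nontrivial M] {n : ℕ} (hn : IsUnit (n ! : R)) : (n : Cardinal) < #M := by
  by_contra! hle
  have : Finite M := Cardinal.lt_aleph0_iff_finite.1 (hle.trans_lt Cardinal.natCast_lt_aleph0)
  have card_dvd : Nat.card M ∣ n ! :=
    Nat.dvd_factorial Nat.card_pos (by rwa [← Nat.cast_card, Nat.cast_le] at hle)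
  obtain ⟨x, hx⟩ := exists_ne (0 : M)
  have factorial_smul : (n ! : R) • x = 0 := by
    rw [Nat.cast_smul_eq_nsmul]
    exact addOrderOf_dvd_iff_nsmul_eq_zero.1 ((addOrderOf_dvd_natCard x).trans card_dvd)
  exact hx (hn.smul_eq_zero.1 factorial_smul)

theorem finiteType_int_subringClosure {R : Type*} [CommRing R] {s : Set R} (hs : s.Finite) :
    Algebra.FiniteType ℤ (Subring.closure s) :=
  (Algebra.FiniteType.adjoin_of_finite hs).equiv (Subring.closureEquivAdjoinInt s).symm

/-- `ℤ[i, 1/n!]` is dense in `ℂ`, has no proper ideals of index ≤ n,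
and is a finitely generated ring. -/
theorem stmt_11 (n : ℕ) (hn : 2 ≤ n) :
    Dense ((Subring.closure {Complex.I, ((n.factorial : ℂ))⁻¹} : Subring ℂ) : Set ℂ) ∧
    (∀ I : Ideal ↥(Subring.closure {Complex.I, ((n.factorial : ℂ))⁻¹}), I ≠ ⊤ →
      (n : Cardinal) <
        Cardinal.mk (↥(Subring.closure {Complex.I, ((n.factorial : ℂ))⁻¹}) ⧸ I)) ∧
    Algebra.FiniteType ℤ ↥(Subring.closure {Complex.I, ((n.factorial : ℂ))⁻¹}) := by
  set S := Subring.closure {Complex.I, (n ! : ℂ)⁻¹}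
  have I_mem : Complex.I ∈ S := Subring.subset_closure (by simp)
  have inv_mem : (n ! : ℂ)⁻¹ ∈ S := Subring.subset_closure (by simp)
  refine ⟨?_, fun I hI ↦ ?_, finiteType_int_subringClosure (Set.toFinite _)⟩
  · have inv_mem_real : (n ! : ℝ)⁻¹ ∈ S.comap Complex.ofRealHom := by simpa using inv_mem
    have one_lt_factorial : (1 : ℝ) < n ! := by exact_mod_cast hn.trans n.self_le_factorial
    exact dense_subring_of_dense_comap_ofReal I_mem <|
      dense_subring_of_mem_Ioo_zero_one inv_mem_real
        ⟨by positivity, inv_lt_one_of_one_lt₀ one_lt_factorial⟩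
  · have : Nontrivial (S ⧸ I) := Ideal.Quotient.nontrivial_iff.2 hI
    have isUnit_factorial : IsUnit (n ! : S) :=
      (Submonoid.isUnit_iff_of_ne_zero (by simpa using n.factorial_ne_zero)).2 (by simpa)
    exact natCast_lt_mk_of_isUnit_factorial isUnit_factorial
end

section
/- Let k be a finite field with q elements, let n ≥ 2 be an integer, and let f_n ∈ k[t] be the product of all monic irreducible polynomials in k[t] of degree at most log_q(n) (equivalently, of degree e with q^e ≤ n). Then the subring R = k[t][1/(t·f_n)] of the field of formal Laurent series k((t)) is dense in k((t)) with respect to the t-adic topology, and every proper ideal I of R satisfies card(R/I) > n; in particular, R is a finitely generated ring with no proper ideals of index at most n. -/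
/-!
Every Laurent series is `t ^ m` times a power series and power series are `t`-adic limits of
polynomials, so a subring of `k((t))` containing `k[t]` and `t⁻¹` is dense. If a maximal ideal of
`R` had index at most `n`, its residue field would be a finite extension of `k`, and the minimal
polynomial of the image of `t` would be one of the irreducible polynomials inverted in `R`, yet
vanish in the residue field.
-/

section

open Polynomial

theorem natCard_pow_natDegree_minpoly_le {k A : Type*} [Field k] [Ring A] [Algebra k A]
    [Nontrivial A] [Finite A] (x : A) :
    Nat.card k ^ (minpoly k x).natDegree ≤ Nat.card A := by
  have : Finite k := Finite.of_injective _ (algebraMap k A).injective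
  rw [Module.natCard_eq_pow_finrank (K := k) (V := A)]
  exact Nat.pow_le_pow_right Nat.card_pos (minpoly.natDegree_le x)

section Index

variable {k A : Type*} [Field k] [CommRing A]

theorem natCast_lt_mk_quotient_of_forall_isMaximal {n : ℕ}
    (h : ∀ M : Ideal A, M.IsMaximal → Finite (A ⧸ M) → n < Nat.card (A ⧸ M))
    {I : Ideal A} (hI : I ≠ ⊤) : (n : Cardinal) < Cardinal.mk (A ⧸ I) := by
  obtain ⟨M, hM, hIM⟩ := Ideal.exists_le_maximal I hI
  refine lt_of_lt_of_le ?_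
    (Cardinal.mk_le_of_surjective (Ideal.Quotient.factor_surjective hIM))
  rcases finite_or_infinite (A ⧸ M) with hfin | hinf
  · rw [← Nat.cast_card]
    exact Nat.cast_lt.2 (h M hM hfin)
  · exact Cardinal.natCast_lt_aleph0.trans_le (Cardinal.aleph0_le_mk _)

theorem natCast_lt_mk_quotient_of_isUnit_aeval [Algebra k A] {n : ℕ} (x : A)
    (h : ∀ p : k[X], p.Monic → Irreducible p → Nat.card k ^ p.natDegree ≤ n →
      IsUnit (aeval x p))
    {I : Ideal A} (hI : I ≠ ⊤) : (n : Cardinal) < Cardinal.mk (A ⧸ I) := by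
  refine natCast_lt_mk_quotient_of_forall_isMaximal (fun M _ _ ↦ ?_) hI
  by_contra! hcard
  set y : A ⧸ M := Ideal.Quotient.mkₐ k M x with hy
  have hint : IsIntegral k y := .of_finite k y
  have hunit : IsUnit (aeval x (minpoly k y)) :=
    h _ (minpoly.monic hint) (minpoly.irreducible hint)
      ((natCard_pow_natDegree_minpoly_le y).trans hcard)
  apply (hunit.map (Ideal.Quotient.mkₐ k M)).ne_zero
  rw [← aeval_algHom_apply, ← hy, minpoly.aeval]

theorem natCast_lt_mk_quotient_of_isUnit_map {n : ℕ} (φ : k[X] →+* A)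
    (h : ∀ p : k[X], p.Monic → Irreducible p → Nat.card k ^ p.natDegree ≤ n → IsUnit (φ p))
    {I : Ideal A} (hI : I ≠ ⊤) : (n : Cardinal) < Cardinal.mk (A ⧸ I) := by
  let : Algebra k A := (φ.comp C).toAlgebra
  let ψ : k[X] →ₐ[k] A := { φ with commutes' := fun _ ↦ rfl }
  refine natCast_lt_mk_quotient_of_isUnit_aeval (k := k) (φ X) (fun p hmonic hirr hcard ↦ ?_) hI
  have hφ : φ p = aeval (φ X) p := eval_unique ψ p
  exact hφ ▸ h p hmonic hirr hcard

end Index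

section AdjoinInv

variable {A K : Type*} [CommRing A] [Field K] [Algebra A K]

theorem inv_algebraMap_mem_adjoin_of_dvd {a g : A} (hg : algebraMap A K g ≠ 0) (hag : a ∣ g) :
    (algebraMap A K a)⁻¹ ∈ Algebra.adjoin A {(algebraMap A K g)⁻¹} := by
  obtain ⟨b, rfl⟩ := hag
  rw [map_mul] at hg
  have hinv : (algebraMap A K a)⁻¹ = algebraMap A K b * (algebraMap A K (a * b))⁻¹ := by
    rw [map_mul, mul_inv_rev, mul_inv_cancel_left₀ (right_ne_zero_of_mul hg)]
  rw [hinv]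
  exact mul_mem (algebraMap_mem _ b) (Algebra.self_mem_adjoin_singleton A _)

theorem isUnit_algebraMap_adjoin_of_dvd {a g : A} (hg : algebraMap A K g ≠ 0) (hag : a ∣ g) :
    IsUnit (algebraMap A (Algebra.adjoin A {(algebraMap A K g)⁻¹}) a) := by
  have ha : algebraMap A K a ≠ 0 := ne_zero_of_dvd_ne_zero hg (map_dvd _ hag)
  exact .of_mul_eq_one ⟨_, inv_algebraMap_mem_adjoin_of_dvd hg hag⟩
    (Subtype.ext (mul_inv_cancel₀ ha))

end AdjoinInv

theorem finiteType_int_polynomial {k : Type*} [CommRing k] [Finite k] :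
    Algebra.FiniteType ℤ k[X] :=
  have : Module.Finite ℤ k := .of_finite
  .trans (S := k) inferInstance inferInstance

section Dense

open scoped LaurentSeries PowerSeries

variable {k : Type*} [Field k]

theorem aeval_single_one_eq_algebraMap (p : k[X]) :
    aeval (HahnSeries.single (1 : ℤ) (1 : k)) p = algebraMap k[X] k⸨X⸩ p := by
  suffices h : (aeval (R := k) (HahnSeries.single (1 : ℤ) (1 : k))).toRingHom =
      algebraMap k[X] k⸨X⸩ from RingHom.congr_fun h p
  refine ringHom_ext (fun a ↦ ?_) ?_
  · rw [AlgHom.toRingHom_eq_coe, RingHom.coe_coe, aeval_C, LaurentSeries.algebraMap_apply,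
      algebraMap_hahnSeries_apply, coe_C, HahnSeries.ofPowerSeries_C]
  · rw [AlgHom.toRingHom_eq_coe, RingHom.coe_coe, aeval_X, algebraMap_hahnSeries_apply, coe_X,
      HahnSeries.ofPowerSeries_X]

theorem ofPowerSeries_mem_closure_range_algebraMap (F : k⟦X⟧) :
    HahnSeries.ofPowerSeries ℤ k F ∈ closure (Set.range (algebraMap k[X] k⸨X⸩)) := by
  rw [mem_closure_iff_nhds]
  intro U hU
  obtain ⟨γ, hγ⟩ := Valued.mem_nhds.1 hU
  obtain ⟨p, hp⟩ := LaurentSeries.exists_Polynomial_intValuation_lt F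
    (γ.map (MonoidWithZeroHom.ValueGroup₀.embedding (f := .ofClass (LaurentSeries.valued k).v)))
  refine ⟨algebraMap k[X] k⸨X⸩ p, hγ ?_, p, rfl⟩
  rw [Set.mem_ofPred_eq, Valuation.restrict_lt_iff_lt_embedding, Valuation.map_sub_swap,
    algebraMap_hahnSeries_apply, ← PowerSeries.coe_sub]
  exact ((PowerSeries.idealX k).valuation_of_algebraMap (F - p)).trans_lt hp

theorem dense_of_inv_X_mem {S : Subalgebra k[X] k⸨X⸩} (hS : (algebraMap k[X] k⸨X⸩ X)⁻¹ ∈ S) :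
    Dense (S : Set k⸨X⸩) := by
  have hzpow (m : ℤ) : HahnSeries.single m (1 : k) ∈ S := by
    rw [RatFunc.single_zpow, ← aeval_X (R := k) (HahnSeries.single (1 : ℤ) (1 : k)),
      aeval_single_one_eq_algebraMap]
    cases m with
    | ofNat m => simpa using pow_mem (algebraMap_mem S X) m
    | negSucc m => simpa only [zpow_negSucc, inv_pow] using pow_mem hS (m + 1)
  have hrange : Set.range (algebraMap k[X] k⸨X⸩) ⊆ S := by
    rintro _ ⟨p, rfl⟩
    exact algebraMap_mem S p
  intro x
  rw [← LaurentSeries.single_order_mul_powerSeriesPart x]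
  exact mul_mem (s := S.toSubring.topologicalClosure) (subset_closure (hzpow _))
    (closure_mono hrange (ofPowerSeries_mem_closure_range_algebraMap _))

end Dense

end

/-- `k[t][1/(t·f_n)]` is dense in `k((t))` and has no proper ideals of
index ≤ n, where `f_n` is the product of all monic irreducible polynomials of degree
`e` with `q^e ≤ n` (`q` the cardinality of the finite field `k`). -/
theorem stmt_12 (k : Type) [Field k] [Fintype k] (n : ℕ) (hn : 2 ≤ n)
    (F : Finset (Polynomial k))
    (hF : ∀ p : Polynomial k,
      p ∈ F ↔ p.Monic ∧ Irreducible p ∧ Fintype.card k ^ p.natDegree ≤ n)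
    (f : Polynomial k) (hf : f = ∏ p ∈ F, p)
    (R : Subring (LaurentSeries k))
    (hR : R = Subring.closure
      ({x | ∃ p : Polynomial k, x = Polynomial.aeval (HahnSeries.single (1 : ℤ) (1 : k)) p}
        ∪ {(Polynomial.aeval (HahnSeries.single (1 : ℤ) (1 : k)) (Polynomial.X * f))⁻¹})) :
    Dense (↑R : Set (LaurentSeries k)) ∧
    (∀ I : Ideal ↥R, I ≠ ⊤ → (n : Cardinal) < Cardinal.mk (↥R ⧸ I)) ∧
    Algebra.FiniteType ℤ ↥R := by
  have hf0 : f ≠ 0 := hf ▸ Finset.prod_ne_zero_iff.2 fun p hp ↦ ((hF p).1 hp).1.ne_zero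
  have hg : algebraMap (Polynomial k) (LaurentSeries k) (Polynomial.X * f) ≠ 0 :=
    (FaithfulSMul.algebraMap_eq_zero_iff _ _).not.2 (mul_ne_zero Polynomial.X_ne_zero hf0)
  obtain rfl : R = (Algebra.adjoin (Polynomial k)
      {(algebraMap (Polynomial k) (LaurentSeries k) (Polynomial.X * f))⁻¹}).toSubring := by
    simp only [hR, Algebra.adjoin_eq_ring_closure, aeval_single_one_eq_algebraMap, eq_comm,
      Set.range]
  refine ⟨dense_of_inv_X_mem (inv_algebraMap_mem_adjoin_of_dvd hg (dvd_mul_right _ f)),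
    fun I hI ↦ ?_,
    .trans (A := Algebra.adjoin _ _) finiteType_int_polynomial
      (.adjoin_of_finite (Set.finite_singleton _))⟩
  refine natCast_lt_mk_quotient_of_isUnit_map (A := Algebra.adjoin _ _) (algebraMap _ _)
    (fun p hmonic hirr hcard ↦ isUnit_algebraMap_adjoin_of_dvd hg ?_) hI
  rw [Nat.card_eq_fintype_card] at hcard
  exact hf ▸ (Finset.dvd_prod_of_mem _ ((hF p).2 ⟨hmonic, hirr, hcard⟩)).mul_left _
end

section
/- Let p be a prime, let n ≥ 2 be an integer, let F be a finite field extension of ℚ_p, and let α ∈ F be an element such that the ℚ_p-subalgebra of F generated by α equals F. Then the subring R = ℤ[α, 1/(p·n!)] of F (the smallest subring of F containing α and 1/(p·n!)) is dense in F, and every proper ideal I of R satisfies card(R/I) > n; in particular, R is a finitely generated ring with no proper ideals of index at most n. -/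
/-!
A closed subring of `ℚ_[p]` contains the closure `ℤ_[p]` of `ℤ`, so if it also contains `p⁻¹` it is
everything. Applied to the preimage of the closure of `R`, this shows that the closure of `R` is a
closed `ℚ_[p]`-subalgebra, hence all of `F` once `R` generates a dense subalgebra.

An additive subgroup of index at most `n` contains every multiple by `n!`. As `n!` is a unit of `R`,
an ideal of index at most `n` contains a unit.
-/

open scoped Cardinal Nat

theorem factorial_nsmul_mem_of_mk_quotient_le {A : Type*} [AddGroup A] {H : AddSubgroup A} {n : ℕ}
    (h : #(A ⧸ H) ≤ n) (a : A) : n ! • a ∈ H := by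
  have hfin : Finite (A ⧸ H) :=
    Cardinal.lt_aleph0_iff_finite.mp (h.trans_lt Cardinal.natCast_lt_aleph0)
  have hindex : H.index ≤ n := by
    rw [← Nat.cast_card] at h
    exact_mod_cast h
  exact AddSubgroup.nsmul_mem_of_index_ne_zero_of_dvd AddSubgroup.index_ne_zero_of_finite a
    fun _ hpos hle ↦ Nat.dvd_factorial hpos (hle.trans hindex)

theorem natCast_lt_mk_quotient_of_isUnit_factorial {R : Type*} [Ring R] {n : ℕ}
    (hn : IsUnit (n ! : R)) {I : Ideal R} (hI : I ≠ ⊤) : n < #(R ⧸ I) := by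
  by_contra! hle
  have hmem : (n ! : R) ∈ I := by
    simpa using factorial_nsmul_mem_of_mk_quotient_le (H := I.toAddSubgroup) hle 1
  exact hI (I.eq_top_of_isUnit_mem hmem hn)

theorem finiteType_int_closure {R : Type*} [Ring R] {s : Set R} (hs : s.Finite) :
    Algebra.FiniteType ℤ (Subring.closure s) :=
  (Subalgebra.fg_iff_finiteType (subalgebraOfSubring (Subring.closure s))).mp
    (Subalgebra.fg_def.mpr ⟨s, hs, Algebra.adjoin_int s⟩)

theorem inv_natCast_mem_of_dvd {K : Type*} [DivisionRing K] {S : Subring K} {a b : ℕ}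
    (hab : a ∣ b) (hb : (b : K) ≠ 0) (hS : (b : K)⁻¹ ∈ S) : (a : K)⁻¹ ∈ S := by
  obtain ⟨c, rfl⟩ := hab
  rw [Nat.cast_mul] at hb hS
  have hinv : (a : K)⁻¹ = c * (a * c : K)⁻¹ := by
    rw [mul_inv_rev, mul_inv_cancel_left₀ (right_ne_zero_of_mul hb)]
  exact hinv ▸ S.mul_mem (natCast_mem S c) hS

theorem isUnit_natCast_of_inv_mem_comap {K F : Type*} [Field K] [Ring F] [Algebra K F]
    {R : Subring F} {m : ℕ} (hm : (m : K) ≠ 0) (hR : (m : K)⁻¹ ∈ R.comap (algebraMap K F)) :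
    IsUnit (m : R) := by
  have hmul : (m : F) * algebraMap K F (m : K)⁻¹ = 1 := by
    rw [← map_natCast (algebraMap K F), ← map_mul, mul_inv_cancel₀ hm, map_one]
  let u : R := ⟨algebraMap K F (m : K)⁻¹, hR⟩
  have hmu : (m : R) * u = 1 := Subtype.ext (by simpa using hmul)
  exact isUnit_iff_exists.mpr ⟨u, hmu, (Nat.cast_commute m u).eq ▸ hmu⟩

theorem exists_norm_mul_pow_le_one {A : Type*} [SeminormedRing A] {a : A} (ha : ‖a‖ < 1) (x : A) :
    ∃ k : ℕ, ‖x * a ^ k‖ ≤ 1 := by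
  have hlim := ((tendsto_pow_atTop_nhds_zero_of_norm_lt_one ha).const_mul x).norm
  rw [mul_zero, norm_zero] at hlim
  exact (hlim.eventually_le_const one_pos).exists

section Padic

variable {p : ℕ} [Fact p.Prime]

theorem padicInt_subring_le_of_isClosed {S : Subring ℚ_[p]} (hS : IsClosed (S : Set ℚ_[p])) :
    PadicInt.subring p ≤ S := fun z hz ↦
  PadicInt.denseRange_intCast.induction_on (p := fun z : ℤ_[p] ↦ (z : ℚ_[p]) ∈ S) ⟨z, hz⟩
    (hS.preimage continuous_subtype_val) (by simp)

theorem eq_top_of_isClosed_of_inv_prime_mem {S : Subring ℚ_[p]} (hS : IsClosed (S : Set ℚ_[p]))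
    (hp : (p : ℚ_[p])⁻¹ ∈ S) : S = ⊤ := by
  refine eq_top_iff.mpr fun x _ ↦ ?_
  obtain ⟨k, hk⟩ := exists_norm_mul_pow_le_one Padic.norm_p_lt_one x
  have hp0 : (p : ℚ_[p]) ≠ 0 := Nat.cast_ne_zero.mpr (Fact.out : p.Prime).ne_zero
  have hx : x * (p : ℚ_[p]) ^ k * (p : ℚ_[p])⁻¹ ^ k = x := by
    rw [inv_pow, mul_inv_cancel_right₀ (pow_ne_zero k hp0)]
  exact hx ▸ S.mul_mem (padicInt_subring_le_of_isClosed hS hk) (S.pow_mem hp k)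

variable {F : Type*} [Ring F] [TopologicalSpace F] [IsTopologicalRing F] [Algebra ℚ_[p] F]
  [ContinuousSMul ℚ_[p] F]

theorem algebraMap_padic_mem_topologicalClosure {R : Subring F}
    (hp : (p : ℚ_[p])⁻¹ ∈ R.comap (algebraMap ℚ_[p] F)) (x : ℚ_[p]) :
    algebraMap ℚ_[p] F x ∈ R.topologicalClosure := by
  have htop : R.topologicalClosure.comap (algebraMap ℚ_[p] F) = ⊤ :=
    eq_top_of_isClosed_of_inv_prime_mem
      (R.isClosed_topologicalClosure.preimage (continuous_algebraMap ℚ_[p] F))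
      (R.le_topologicalClosure hp)
  exact Subring.mem_comap.mp (htop ▸ Subring.mem_top x)

theorem dense_of_dense_adjoin_padic {R : Subring F}
    (hp : (p : ℚ_[p])⁻¹ ∈ R.comap (algebraMap ℚ_[p] F))
    (hR : Dense (Algebra.adjoin ℚ_[p] (R : Set F) : Set F)) : Dense (R : Set F) := by
  let closureAlg : Subalgebra ℚ_[p] F :=
    { R.topologicalClosure with algebraMap_mem' := algebraMap_padic_mem_topologicalClosure hp }
  have hle : Algebra.adjoin ℚ_[p] (R : Set F) ≤ closureAlg :=
    Algebra.adjoin_le R.le_topologicalClosure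
  exact dense_closure.mp (hR.mono hle)

theorem stmt_14_general {n : ℕ} {s : Set F} (hs : s.Finite)
    (hdense : Dense (Algebra.adjoin ℚ_[p] s : Set F))
    (hinv : algebraMap ℚ_[p] F ((p : ℚ_[p]) * n !)⁻¹ ∈ s) :
    Dense (Subring.closure s : Set F) ∧
    (∀ I : Ideal (Subring.closure s), I ≠ ⊤ → (n : Cardinal) < #(Subring.closure s ⧸ I)) ∧
    Algebra.FiniteType ℤ (Subring.closure s) := by
  have hpn : ((p * n ! : ℕ) : ℚ_[p]) ≠ 0 := Nat.cast_ne_zero.mpr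
    (mul_ne_zero (Fact.out : p.Prime).ne_zero n.factorial_ne_zero)
  have hpn_inv : ((p * n ! : ℕ) : ℚ_[p])⁻¹ ∈
      (Subring.closure s).comap (algebraMap ℚ_[p] F) := by
    rw [Nat.cast_mul]
    exact Subring.subset_closure hinv
  have hp_inv := inv_natCast_mem_of_dvd (Nat.dvd_mul_right p n !) hpn hpn_inv
  have hn_inv := inv_natCast_mem_of_dvd (Nat.dvd_mul_left n ! p) hpn hpn_inv
  have hn_unit : IsUnit (n ! : Subring.closure s) :=
    isUnit_natCast_of_inv_mem_comap (Nat.cast_ne_zero.mpr n.factorial_ne_zero) hn_inv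
  exact ⟨dense_of_dense_adjoin_padic hp_inv
      (hdense.mono (Algebra.adjoin_mono Subring.subset_closure)),
    fun _ hI ↦ natCast_lt_mk_quotient_of_isUnit_factorial hn_unit hI, finiteType_int_closure hs⟩

end Padic

/-- for a finite extension `F = ℚ_p[α]` of `ℚ_p`, the subring
`ℤ[α, 1/(p·n!)]` is dense in `F` and has no proper ideals of index ≤ n; in particular
it is a finitely generated ring. -/
theorem stmt_14 (p : ℕ) [Fact p.Prime] (n : ℕ) (hn : 2 ≤ n)
    (F : Type) [NormedField F] [NormedAlgebra ℚ_[p] F] [FiniteDimensional ℚ_[p] F]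
    (α : F) (hα : Algebra.adjoin ℚ_[p] {α} = ⊤) :
    Dense ((Subring.closure {α, ((p : F) * (n.factorial : F))⁻¹} : Subring F) : Set F) ∧
    (∀ I : Ideal ↥(Subring.closure {α, ((p : F) * (n.factorial : F))⁻¹}), I ≠ ⊤ →
      (n : Cardinal) <
        Cardinal.mk (↥(Subring.closure {α, ((p : F) * (n.factorial : F))⁻¹}) ⧸ I)) ∧
    Algebra.FiniteType ℤ ↥(Subring.closure {α, ((p : F) * (n.factorial : F))⁻¹}) := by
  have hadjoin : Algebra.adjoin ℚ_[p] {α, ((p : F) * (n.factorial : F))⁻¹} = ⊤ :=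
    top_le_iff.mp (hα ▸ Algebra.adjoin_mono (by simp))
  exact stmt_14_general (p := p) (Set.toFinite _) (hadjoin ▸ dense_univ) (by simp)
end

section
/- For every integer n ≥ 2, the pair (SL_2(ℤ) ⋉ V_n(ℤ), V_n(ℤ)) has relative property (T), where V_n(ℤ) is identified with the normal subgroup {1} ⋉ V_n(ℤ) of the semidirect product. -/
/-- `V_n(ℤ)`: the module of homogeneous polynomials of degree `n - 1` in two variables
over `ℤ`. -/
noncomputable abbrev VnZ (n : ℕ) : Submodule ℤ (MvPolynomial (Fin 2) ℤ) :=
  MvPolynomial.homogeneousSubmodule (Fin 2) ℤ (n - 1)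

/-!
Restrict a unitary representation of `SL₂(ℤ) ⋉ V_{d+1}(ℤ)`, `d ≥ 1`, to the abelian subgroup
`V_{d+1}(ℤ)`. Each vector `v` has a spectral measure on the dual torus, and if `v` is almost
invariant then this measure is concentrated near the identity `1` and is almost invariant under
the dual action of `SL₂(ℤ)`; its atom at `1` vanishes as soon as there is no nonzero
`V_{d+1}(ℤ)`-fixed vector.

Lift a small neighbourhood of `1` to `ℝ^{d+1}`, and let `C` be the cone of those vectors whose
coordinate of index `0` is not strictly dominant. Identify a vector `θ` with the polynomial
`p = ∑ j, d.choose j * θ j * T ^ j`. The unipotent element `X ↦ X, Y ↦ X + Y` then translates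
the variable of `p`, and a polynomial coming from `C` has a complex root of norm less than `2`,
because its constant coefficient is small compared with another one. So the `m`-th point of the
orbit of a nonzero vector lies in `C` only if `m` is within distance `2` of one of the at most `d`
roots of `p`, that is, for at most `4 * d` values of `m`. By almost invariance, averaging over
`32 * d` values of `m` shows that the image of `C` carries little mass. The Weyl element
`X ↦ Y, Y ↦ -X` maps the complement of `C` into `C`, so the whole neighbourhood carries too little
mass, a contradiction.
-/

open MeasureTheory
open scoped InnerProductSpace

namespace RelativeT

section LaurentMonomials

variable {ι Γ Δ : Type*} [Fintype ι] [CommGroup Γ] [CommGroup Δ]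

/-- The Laurent monomial `x ^ c = ∏ j, x j ^ c j` with integer exponents. -/
def zpowProd (x : ι → Γ) (c : ι → ℤ) : Γ :=
  ∏ j, x j ^ c j

theorem map_zpowProd (f : Γ →* Δ) (x : ι → Γ) (c : ι → ℤ) :
    f (zpowProd x c) = zpowProd (fun j ↦ f (x j)) c := by
  simp only [zpowProd, map_prod, map_zpow]

theorem zpowProd_single [DecidableEq ι] (x : ι → Γ) (i : ι) :
    zpowProd x (Pi.single i 1) = x i := by
  rw [zpowProd, Finset.prod_eq_single i (fun j _ hj ↦ by simp [hj]) (by simp)]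
  simp

open scoped Matrix in
theorem zpowProd_zpowProd (x : ι → Γ) (A : Matrix ι ι ℤ) (c : ι → ℤ) :
    zpowProd (fun i ↦ zpowProd x (A i)) c = zpowProd x (c ᵥ* A) := by
  have zpow_sum (g : Γ) (e : ι → ℤ) : g ^ ∑ j, e j = ∏ j, g ^ e j :=
    Finset.sum_smul (R := ℤ) (M := Additive Γ)
  simp only [zpowProd, Matrix.vecMul, dotProduct, zpow_sum, ← Finset.prod_zpow, ← zpow_mul]
  rw [Finset.prod_comm]
  simp only [mul_comm]

end LaurentMonomials

section Torus

variable {ι : Type*} [Fintype ι]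

theorem continuous_zpowProd (c : ι → ℤ) : Continuous fun z : ι → Circle ↦ zpowProd z c :=
  continuous_finsetProd _ fun j _ ↦ (continuous_apply j).zpow (c j)

/-- The character `z ↦ z ^ c` of the torus `Circle ^ ι`. -/
noncomputable def torusChar (c : ι → ℤ) : C(ι → Circle, ℂ) where
  toFun z := (zpowProd z c : Circle)
  continuous_toFun := continuous_subtype_val.comp (continuous_zpowProd c)

/-- The endomorphism of the torus `Circle ^ ι` whose `i`-th coordinate is the Laurent monomial
given by the `i`-th row of the integer matrix `A`. -/
noncomputable def torusMap (A : Matrix ι ι ℤ) : C(ι → Circle, ι → Circle) where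
  toFun z i := zpowProd z (A i)
  continuous_toFun := continuous_pi fun i ↦ continuous_zpowProd (A i)

theorem torusMap_one [DecidableEq ι] : torusMap (1 : Matrix ι ι ℤ) = ContinuousMap.id _ := by
  ext1 z
  funext i
  refine (congrArg (zpowProd z) ?_).trans (zpowProd_single z i)
  exact funext fun j ↦ Matrix.one_eq_pi_single

theorem torusMap_comp (A B : Matrix ι ι ℤ) :
    (torusMap A).comp (torusMap B) = torusMap (A * B) := by
  ext1 z
  funext i
  exact zpowProd_zpowProd z B (A i)

theorem torusChar_single_apply [DecidableEq ι] (i : ι) (z : ι → Circle) :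
    torusChar (Pi.single i 1) z = z i :=
  congrArg Subtype.val (zpowProd_single z i)

theorem torusChar_single_comp_torusMap [DecidableEq ι] (A : Matrix ι ι ℤ) (i : ι) :
    (torusChar (Pi.single i 1)).comp (torusMap A) = torusChar (A i) :=
  ContinuousMap.ext fun z ↦ torusChar_single_apply i (torusMap A z)

/-- Stone–Weierstrass for the coordinate functions of the torus. -/
theorem topologicalClosure_eq_top_of_torusChar_single_mem [DecidableEq ι]
    (S : StarSubalgebra ℂ C(ι → Circle, ℂ)) (hS : ∀ i, torusChar (Pi.single i 1) ∈ S) :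
    S.topologicalClosure = ⊤ := by
  refine ContinuousMap.starSubalgebra_topologicalClosure_eq_top_of_separatesPoints S ?_
  intro z z' hz
  obtain ⟨i, hi⟩ := Function.ne_iff.mp hz
  refine ⟨_, ⟨_, hS i, rfl⟩, ?_⟩
  simpa only [torusChar_single_apply, ne_eq, Circle.coe_inj] using hi

theorem starAlgHom_ext_of_torusChar_single [DecidableEq ι] {B : Type*} [CStarAlgebra B]
    {F F' : C(ι → Circle, ℂ) →⋆ₐ[ℂ] B}
    (h : ∀ i, F (torusChar (Pi.single i 1)) = F' (torusChar (Pi.single i 1))) : F = F' := by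
  have continuous_coe (G : C(ι → Circle, ℂ) →⋆ₐ[ℂ] B) : Continuous G :=
    AddMonoidHomClass.continuous_of_bound G 1 fun f ↦ by
      simpa using NonUnitalStarAlgHom.norm_apply_le G f
  have isClosed_equalizer :
      IsClosed (StarAlgHom.equalizer F F' : Set C(ι → Circle, ℂ)) :=
    isClosed_eq (continuous_coe F) (continuous_coe F')
  have equalizer_eq_top : StarAlgHom.equalizer F F' = ⊤ :=
    top_le_iff.mp <| (topologicalClosure_eq_top_of_torusChar_single_mem _ h).ge.trans
      (StarSubalgebra.topologicalClosure_minimal le_rfl isClosed_equalizer)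
  exact StarAlgHom.ext fun f ↦ equalizer_eq_top.ge (StarSubalgebra.mem_top (x := f))

end Torus

section FunctionalCalculus

variable {ι : Type*} [Fintype ι] {Γ : Type*} [CommGroup Γ]

/-- The functional calculus is the Gelfand transform, pulled back along `ψ ↦ (ψ (r (x i)))ᵢ`. -/
theorem exists_starAlgHom_torusChar_of_commCStarAlgebra {B : Type*} [CommCStarAlgebra B]
    (r : Γ →* unitary B) (x : ι → Γ) :
    ∃ Ψ : C(ι → Circle, ℂ) →⋆ₐ[ℂ] B, ∀ c, Ψ (torusChar c) = (r (zpowProd x c) : B) := by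
  have mem_circle (ψ : WeakDual.characterSpace ℂ B) (u : unitary B) :
      ψ (u : B) ∈ Submonoid.unitSphere ℂ := by
    simpa [Submonoid.unitSphere] using
      CStarRing.norm_of_mem_unitary (Unitary.map_mem ψ u.2)
  let e (ψ : WeakDual.characterSpace ℂ B) : Γ →* Circle :=
    { toFun := fun γ ↦ (⟨ψ (r γ : B), mem_circle ψ (r γ)⟩ : Circle)
      map_one' := by ext; simp
      map_mul' := fun a b ↦ by ext; simp; rfl }
  let jointSpectrum : C(WeakDual.characterSpace ℂ B, ι → Circle) :=
    { toFun := fun ψ i ↦ e ψ (x i)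
      continuous_toFun := continuous_pi fun i ↦ Continuous.subtype_mk
        ((WeakDual.eval_continuous (r (x i) : B)).comp continuous_subtype_val) _ }
  refine ⟨((gelfandStarTransform B).symm : C(WeakDual.characterSpace ℂ B, ℂ) →⋆ₐ[ℂ] B).comp
    (ContinuousMap.compStarAlgHom' ℂ ℂ jointSpectrum), fun c ↦ ?_⟩
  have comp_jointSpectrum :
      (torusChar c).comp jointSpectrum = gelfandStarTransform B (r (zpowProd x c) : B) := by
    ext ψ
    exact congrArg Subtype.val (map_zpowProd (e ψ) x c).symm
  exact (congrArg _ comp_jointSpectrum).trans ((gelfandStarTransform B).symm_apply_apply _)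

/-- A commuting family of unitaries generates a commutative C⋆-algebra. -/
theorem exists_starAlgHom_torusChar {B : Type*} [CStarAlgebra B]
    (ρ : Γ →* unitary B) (x : ι → Γ) :
    ∃ Ψ : C(ι → Circle, ℂ) →⋆ₐ[ℂ] B, ∀ c, Ψ (torusChar c) = (ρ (zpowProd x c) : B) := by
  let s : Set B := Set.range fun γ ↦ (ρ γ : B)
  have commute_mul (γ γ' : Γ) : (ρ γ : B) * ρ γ' = ρ γ' * ρ γ := by
    exact congrArg Subtype.val (by rw [← map_mul, mul_comm, map_mul] : ρ γ * ρ γ' = ρ γ' * ρ γ)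
  have commute_star (γ γ' : Γ) : (ρ γ : B) * star (ρ γ' : B) = star (ρ γ' : B) * ρ γ := by
    rw [← Unitary.coe_star, Unitary.star_eq_inv, ← map_inv]
    exact commute_mul γ γ'⁻¹
  let A := (StarAlgebra.adjoin ℂ s).topologicalClosure
  have isClosed_A : IsClosed (A : Set B) := StarSubalgebra.isClosed_topologicalClosure _
  have := StarAlgebra.isMulCommutative_adjoin ℂ (s := s)
    (by rintro _ ⟨γ, rfl⟩ _ ⟨γ', rfl⟩; exact commute_mul γ γ')
    (by rintro _ ⟨γ, rfl⟩ _ ⟨γ', rfl⟩; exact commute_star γ γ')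
  let _ : CommCStarAlgebra A :=
    { (inferInstance : CStarAlgebra A) with
      mul_comm := (StarSubalgebra.commRingTopologicalClosure (StarAlgebra.adjoin ℂ s)
        fun a b ↦ mul_comm' a b).mul_comm }
  have mem_A (γ : Γ) : (ρ γ : B) ∈ A :=
    StarSubalgebra.le_topologicalClosure _ (StarAlgebra.subset_adjoin ℂ s ⟨γ, rfl⟩)
  let r : Γ →* unitary A :=
    { toFun := fun γ ↦ ⟨⟨ρ γ, mem_A γ⟩, Subtype.ext (ρ γ).2.1, Subtype.ext (ρ γ).2.2⟩
      map_one' := by ext; simp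
      map_mul' := fun a b ↦ by ext; simp }
  obtain ⟨Ψ, hΨ⟩ := exists_starAlgHom_torusChar_of_commCStarAlgebra r x
  refine ⟨A.subtype.comp Ψ, fun c ↦ ?_⟩
  exact congrArg Subtype.val (hΨ c)

end FunctionalCalculus

section Covariance

variable {X : Type*} [TopologicalSpace X] {B : Type*} [CStarAlgebra B]

/-- The unitary `W` implements, on the image of `Ψ`, the pull-back of functions along `a`. -/
def IsCovariant (Ψ : C(X, ℂ) →⋆ₐ[ℂ] B) (W : unitary B) (a : C(X, X)) : Prop :=
  ∀ f : C(X, ℂ), Ψ (f.comp a) = W * Ψ f * star (W : B)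

variable {Ψ : C(X, ℂ) →⋆ₐ[ℂ] B} {W W' : unitary B} {a a' : C(X, X)}

theorem IsCovariant.one : IsCovariant Ψ 1 (ContinuousMap.id X) := fun f ↦ by simp

theorem IsCovariant.mul (h : IsCovariant Ψ W a) (h' : IsCovariant Ψ W' a') :
    IsCovariant Ψ (W' * W) (a.comp a') := fun f ↦ by
  rw [← ContinuousMap.comp_assoc, h' (f.comp a), h f]
  simp [mul_assoc]

theorem IsCovariant.torusMap_pow {ι : Type*} [Fintype ι] [DecidableEq ι]
    {Ψ : C(ι → Circle, ℂ) →⋆ₐ[ℂ] B} {A : Matrix ι ι ℤ} (h : IsCovariant Ψ W (torusMap A)) (m : ℕ) :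
    IsCovariant Ψ (W ^ m) (torusMap (A ^ m)) := by
  induction m with
  | zero => simpa [torusMap_one] using IsCovariant.one
  | succ m ih => rw [pow_succ, pow_succ', ← torusMap_comp]; exact h.mul ih

theorem isCovariant_torusMap {ι Γ : Type*} [Fintype ι] [CommGroup Γ]
    {Ψ : C(ι → Circle, ℂ) →⋆ₐ[ℂ] B} {ρ : Γ →* unitary B} {x : ι → Γ}
    (hΨ : ∀ c, Ψ (torusChar c) = (ρ (zpowProd x c) : B)) {A : Matrix ι ι ℤ}
    (hW : ∀ i, W * ρ (x i) * W⁻¹ = ρ (zpowProd x (A i))) : IsCovariant Ψ W (torusMap A) := by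
  classical
  suffices Ψ.comp (ContinuousMap.compStarAlgHom' ℂ ℂ (torusMap A)) =
      (Unitary.conjStarAlgAut ℂ B W : B →⋆ₐ[ℂ] B).comp Ψ from DFunLike.congr_fun this
  refine starAlgHom_ext_of_torusChar_single fun i ↦ ?_
  change Ψ ((torusChar (Pi.single i 1)).comp (torusMap A)) = W * Ψ _ * star (W : B)
  rw [torusChar_single_comp_torusMap, hΨ, hΨ, zpowProd_single, ← hW]
  rfl

end Covariance

section UnitaryDisplacement

variable {H : Type*} [NormedAddCommGroup H] [InnerProductSpace ℂ H] [CompleteSpace H]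

theorem norm_star_apply_sub (W : unitary (H →L[ℂ] H)) (v : H) :
    ‖star (W : H →L[ℂ] H) v - v‖ = ‖(W : H →L[ℂ] H) v - v‖ := by
  rw [← Unitary.norm_map W (_ - v), map_sub, ← mul_apply_eq_comp, Unitary.mul_star_self_of_mem W.2,
    one_apply_eq_self, norm_sub_rev]

theorem norm_pow_apply_sub_le (W : unitary (H →L[ℂ] H)) (v : H) (m : ℕ) :
    ‖((W ^ m : unitary (H →L[ℂ] H)) : H →L[ℂ] H) v - v‖ ≤ m * ‖(W : H →L[ℂ] H) v - v‖ := by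
  induction m with
  | zero => simp
  | succ m ih =>
    set Wm : H →L[ℂ] H := ((W ^ m : unitary (H →L[ℂ] H)) : H →L[ℂ] H)
    have step : ‖Wm ((W : H →L[ℂ] H) v - v)‖ = ‖(W : H →L[ℂ] H) v - v‖ :=
      Unitary.norm_map (W ^ m) _
    calc ‖((W ^ (m + 1) : unitary (H →L[ℂ] H)) : H →L[ℂ] H) v - v‖
        = ‖Wm ((W : H →L[ℂ] H) v - v) + (Wm v - v)‖ := by simp [Wm, pow_succ]
      _ ≤ ‖(W : H →L[ℂ] H) v - v‖ + m * ‖(W : H →L[ℂ] H) v - v‖ :=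
        (norm_add_le _ _).trans (add_le_add step.le ih)
      _ = (m + 1 : ℕ) * ‖(W : H →L[ℂ] H) v - v‖ := by push_cast; ring

end UnitaryDisplacement

section SpectralMeasure

/-- Riesz–Markov–Kakutani on a compact space. -/
theorem exists_isFiniteMeasure_integral_eq {X : Type*} [TopologicalSpace X] [CompactSpace X]
    [T2Space X] [MeasurableSpace X] [BorelSpace X] (L : C(X, ℝ) →ₗ[ℝ] ℝ)
    (hL : ∀ f : C(X, ℝ), 0 ≤ f → 0 ≤ L f) :
    ∃ μ : Measure X, IsFiniteMeasure μ ∧ ∀ f : C(X, ℝ), ∫ z, f z ∂μ = L f := by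
  let Λ : CompactlySupportedContinuousMap X ℝ →ₚ[ℝ] ℝ := PositiveLinearMap.mk₀
    { toFun := fun f ↦ L f.toContinuousMap
      map_add' := fun f g ↦ L.map_add f.toContinuousMap g.toContinuousMap
      map_smul' := fun a f ↦ L.map_smul a f.toContinuousMap }
    fun f hf ↦ hL _ (CompactlySupportedContinuousMap.le_def.mp hf)
  have : IsFiniteMeasureOnCompacts (RealRMK.rieszMeasure Λ) := by
    unfold RealRMK.rieszMeasure; infer_instance
  exact ⟨RealRMK.rieszMeasure Λ, inferInstance, fun f ↦
    RealRMK.integral_rieszMeasure Λ (CompactlySupportedContinuousMap.continuousMapEquiv f)⟩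

variable {X : Type*} [TopologicalSpace X] {H : Type*} [NormedAddCommGroup H]
  [InnerProductSpace ℂ H] [CompleteSpace H]

theorem exists_cutoff {X : Type*} [TopologicalSpace X] (g : C(X, ℂ)) {s : ℝ} (hs : 0 < s) :
    ∃ f : C(X, ℂ), (∀ z, g z = 0 → f z = 1) ∧ (∀ z, ‖f z‖ ≤ 1) ∧ ∀ z, ‖f z * g z‖ ≤ s := by
  have pos (z : X) : 0 < s + ‖g z‖ := by positivity
  have norm_f (z : X) : ‖((s / (s + ‖g z‖) : ℝ) : ℂ)‖ = s / (s + ‖g z‖) :=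
    Complex.norm_of_nonneg (by positivity)
  refine ⟨⟨fun z ↦ (s / (s + ‖g z‖) : ℝ), Complex.continuous_ofReal.comp
    (continuous_const.div (by fun_prop) fun z ↦ (pos z).ne')⟩, fun z hz ↦ ?_, fun z ↦ ?_,
    fun z ↦ ?_⟩
  · simp [hz, hs.ne']
  · exact (norm_f z).trans_le ((div_le_one (pos z)).mpr (by simp))
  · rw [ContinuousMap.coe_mk, norm_mul, norm_f, div_mul_eq_mul_div, div_le_iff₀ (pos z)]
    exact mul_le_mul_of_nonneg_left (by simp [hs.le]) hs.le

/-- `μ` is the spectral measure of the vector `v` for the functional calculus `Ψ`. It is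
characterised through squares only, which is the form in which it is used. -/
def IsSpectralMeasure [MeasurableSpace X] (Ψ : C(X, ℂ) →⋆ₐ[ℂ] (H →L[ℂ] H)) (v : H)
    (μ : Measure X) : Prop :=
  ∀ f : C(X, ℂ), ∫ z, ‖f z‖ ^ 2 ∂μ = ‖Ψ f v‖ ^ 2

theorem re_inner_apply_eq_norm_sq (Ψ : C(X, ℂ) →⋆ₐ[ℂ] (H →L[ℂ] H)) (v : H) {g f : C(X, ℂ)}
    (h : ∀ z, g z = (‖f z‖ ^ 2 : ℝ)) : (⟪v, Ψ g v⟫_ℂ).re = ‖Ψ f v‖ ^ 2 := by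
  have eq_star_mul : g = star f * f := by
    ext z
    simp [h, RCLike.star_def, Complex.conj_mul']
  rw [eq_star_mul, map_mul, map_star, mul_apply_eq_comp, ContinuousLinearMap.star_eq_adjoint,
    ContinuousLinearMap.adjoint_inner_right]
  exact inner_self_eq_norm_sq (𝕜 := ℂ) _

theorem exists_isSpectralMeasure [CompactSpace X] [T2Space X] [MeasurableSpace X] [BorelSpace X]
    (Ψ : C(X, ℂ) →⋆ₐ[ℂ] (H →L[ℂ] H)) (v : H) :
    ∃ μ : Measure X, IsFiniteMeasure μ ∧ IsSpectralMeasure Ψ v μ := by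
  let ofReal : C(X, ℝ) →L[ℝ] C(X, ℂ) := Complex.ofRealCLM.compLeftContinuous ℝ X
  let L : C(X, ℝ) →ₗ[ℝ] ℝ :=
    { toFun := fun f ↦ (⟪v, Ψ (ofReal f) v⟫_ℂ).re
      map_add' := fun f g ↦ by simp
      map_smul' := fun a f ↦ by
        have : ofReal (a • f) = (a : ℂ) • ofReal f := by ext; simp [ofReal]
        rw [this, map_smul, smul_apply, inner_smul_right]
        simp }
  have L_eq {g : C(X, ℝ)} {f : C(X, ℂ)} (h : ∀ z, g z = ‖f z‖ ^ 2) : L g = ‖Ψ f v‖ ^ 2 :=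
    re_inner_apply_eq_norm_sq Ψ v fun z ↦ congrArg Complex.ofReal (h z)
  have L_nonneg (g : C(X, ℝ)) (hg : 0 ≤ g) : 0 ≤ L g := by
    let sqrt_g : C(X, ℂ) := ⟨fun z ↦ (√(g z) : ℝ), by fun_prop⟩
    have g_eq (z : X) : g z = ‖sqrt_g z‖ ^ 2 := by
      have : 0 ≤ g z := hg z
      simp [sqrt_g, this]
    rw [L_eq g_eq]
    positivity
  obtain ⟨μ, hμ, integral_eq⟩ := exists_isFiniteMeasure_integral_eq L L_nonneg
  exact ⟨μ, hμ, fun f ↦ (integral_eq ⟨fun z ↦ ‖f z‖ ^ 2, by fun_prop⟩).trans (L_eq fun _ ↦ rfl)⟩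

theorem norm_apply_le_of_forall_norm_le [CompactSpace X] (Ψ : C(X, ℂ) →⋆ₐ[ℂ] (H →L[ℂ] H))
    {f : C(X, ℂ)} {c : ℝ} (hc : 0 ≤ c) (hf : ∀ z, ‖f z‖ ≤ c) (v : H) : ‖Ψ f v‖ ≤ c * ‖v‖ :=
  (Ψ f).le_of_opNorm_le ((NonUnitalStarAlgHom.norm_apply_le Ψ f).trans
    ((ContinuousMap.norm_le f hc).mpr hf)) v

theorem norm_apply_le_norm [CompactSpace X] (Ψ : C(X, ℂ) →⋆ₐ[ℂ] (H →L[ℂ] H))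
    {f : C(X, ℂ)} (hf : ∀ z, ‖f z‖ ≤ 1) (v : H) : ‖Ψ f v‖ ≤ ‖v‖ := by
  simpa using norm_apply_le_of_forall_norm_le Ψ zero_le_one hf v

namespace IsSpectralMeasure

variable [MeasurableSpace X] {Ψ : C(X, ℂ) →⋆ₐ[ℂ] (H →L[ℂ] H)} {v : H} {μ : Measure X}

theorem measureReal_univ (h : IsSpectralMeasure Ψ v μ) : μ.real Set.univ = ‖v‖ ^ 2 := by
  simpa using h 1

theorem isProbabilityMeasure (h : IsSpectralMeasure Ψ v μ) (hv : ‖v‖ = 1) :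
    IsProbabilityMeasure μ := by
  have univ_eq := h.measureReal_univ
  rw [hv, one_pow] at univ_eq
  exact ⟨(ENNReal.toReal_eq_one_iff _).mp univ_eq⟩

variable [CompactSpace X]

theorem abs_integral_comp_sub_le (h : IsSpectralMeasure Ψ v μ) {W : unitary (H →L[ℂ] H)}
    {a : C(X, X)} (hW : IsCovariant Ψ W a) {g : C(X, ℝ)} (hg0 : ∀ z, 0 ≤ g z)
    (hg1 : ∀ z, g z ≤ 1) :
    |∫ z, g (a z) ∂μ - ∫ z, g z ∂μ| ≤ 2 * ‖v‖ * ‖(W : H →L[ℂ] H) v - v‖ := by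
  let f : C(X, ℂ) := ⟨fun z ↦ (√(g z) : ℝ), by fun_prop⟩
  have g_eq (z : X) : g z = ‖f z‖ ^ 2 := by simp [f, Real.sq_sqrt (hg0 z)]
  have norm_f_le (z : X) : ‖f z‖ ≤ 1 := by simpa [f, abs_of_nonneg] using hg1 z
  set u : H := star (W : H →L[ℂ] H) v
  have integral_comp : ∫ z, g (a z) ∂μ = ‖Ψ f u‖ ^ 2 := by
    simp only [g_eq]
    refine (h (f.comp a)).trans ?_
    rw [hW f]
    exact congrArg (· ^ 2) (Unitary.norm_map W _)
  have integral_self : ∫ z, g z ∂μ = ‖Ψ f v‖ ^ 2 := by simp only [g_eq, h f]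
  have norm_u : ‖u‖ = ‖v‖ := Unitary.norm_map (star W) v
  have norm_sub_le : |‖Ψ f u‖ - ‖Ψ f v‖| ≤ ‖(W : H →L[ℂ] H) v - v‖ := calc
    |‖Ψ f u‖ - ‖Ψ f v‖| ≤ ‖Ψ f (u - v)‖ := by simpa using abs_norm_sub_norm_le (Ψ f u) (Ψ f v)
    _ ≤ ‖u - v‖ := norm_apply_le_norm Ψ norm_f_le _
    _ = ‖(W : H →L[ℂ] H) v - v‖ := norm_star_apply_sub W v
  have norm_add_le : ‖Ψ f u‖ + ‖Ψ f v‖ ≤ 2 * ‖v‖ := by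
    linarith [norm_apply_le_norm Ψ norm_f_le u, norm_apply_le_norm Ψ norm_f_le v]
  rw [integral_comp, integral_self, sq_sub_sq, abs_mul, abs_of_nonneg (by positivity)]
  gcongr

variable [BorelSpace X] [IsFiniteMeasure μ]

theorem sq_mul_measureReal_le (h : IsSpectralMeasure Ψ v μ) (g : C(X, ℂ)) {δ : ℝ} (hδ : 0 ≤ δ) :
    δ ^ 2 * μ.real {z | δ ≤ ‖g z‖} ≤ ‖Ψ g v‖ ^ 2 := by
  have integrable : Integrable (fun z ↦ ‖g z‖ ^ 2) μ :=
    Continuous.integrable_of_hasCompactSupport (by fun_prop) (.of_compactSpace _)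
  have chebyshev := mul_meas_ge_le_integral_of_nonneg (.of_forall fun z ↦ by positivity)
    integrable (δ ^ 2)
  simpa only [pow_le_pow_iff_left₀ hδ (norm_nonneg _) two_ne_zero, h g] using chebyshev

/-- Cutting off `Ψ` near the zero set of `g` by the functions `s / (s + ‖g‖)` kills the range
of `Ψ (star g) = (Ψ g)†`, which is dense. -/
theorem measureReal_zeros_eq_zero (h : IsSpectralMeasure Ψ v μ) {g : C(X, ℂ)}
    (hg : ∀ w, Ψ g w = 0 → w = 0) : μ.real {z | g z = 0} = 0 := by
  have denseRange : DenseRange (Ψ (star g)) := by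
    have ker_eq_bot : (Ψ g).ker = ⊥ := (Submodule.eq_bot_iff _).mpr hg
    have closure_range := (Ψ g).orthogonal_ker
    rw [ker_eq_bot, Submodule.bot_orthogonal_eq_top, eq_comm,
      ← ContinuousLinearMap.star_eq_adjoint, ← map_star] at closure_range
    exact Submodule.dense_iff_topologicalClosure_eq_top.mpr closure_range
  suffices √(μ.real {z | g z = 0}) ≤ 0 from
    (Real.sqrt_eq_zero measureReal_nonneg).mp (this.antisymm (Real.sqrt_nonneg _))
  refine le_of_forall_pos_le_add fun η hη ↦ ?_
  obtain ⟨y, hy⟩ := denseRange.exists_dist_lt v (half_pos hη)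
  rw [dist_eq_norm] at hy
  obtain ⟨f, f_eq_one, norm_f_le, norm_f_mul_le⟩ :=
    exists_cutoff (star g) (s := η / 2 / (‖y‖ + 1)) (by positivity)
  have norm_apply_y : ‖Ψ f (Ψ (star g) y)‖ ≤ η / 2 := calc
    ‖Ψ f (Ψ (star g) y)‖ = ‖Ψ (f * star g) y‖ := by rw [map_mul, mul_apply_eq_comp]
    _ ≤ η / 2 / (‖y‖ + 1) * ‖y‖ :=
      norm_apply_le_of_forall_norm_le Ψ (by positivity) norm_f_mul_le y
    _ ≤ η / 2 := by
      rw [div_mul_eq_mul_div, div_le_iff₀ (by positivity)]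
      gcongr
      exact le_add_of_nonneg_right zero_le_one
  have norm_apply_v : ‖Ψ f v‖ ≤ η := calc
    ‖Ψ f v‖ = ‖Ψ f (v - Ψ (star g) y) + Ψ f (Ψ (star g) y)‖ := by simp
    _ ≤ ‖v - Ψ (star g) y‖ + η / 2 := (norm_add_le _ _).trans
      (add_le_add (norm_apply_le_norm Ψ norm_f_le _) norm_apply_y)
    _ ≤ η := by linarith
  have zeros_subset : {z | g z = 0} ⊆ {z | 1 ≤ ‖f z‖} := fun z hz ↦ by
    simp [f_eq_one z (by simpa using hz)]
  have chebyshev := h.sq_mul_measureReal_le f zero_le_one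
  rw [one_pow, one_mul] at chebyshev
  rw [zero_add]
  exact Real.sqrt_le_iff.mpr ⟨hη.le, (measureReal_mono zeros_subset).trans
    (chebyshev.trans (by gcongr))⟩

end IsSpectralMeasure

theorem abs_measureReal_sub_le_of_forall_abs_integral_sub_le {Y : Type*} [PseudoEMetricSpace Y]
    [MeasurableSpace Y] [BorelSpace Y] {μ ν : Measure Y} [IsFiniteMeasure μ] [IsFiniteMeasure ν]
    {c : ℝ} (h : ∀ g : C(Y, ℝ), (∀ z, 0 ≤ g z) → (∀ z, g z ≤ 1) →
      |∫ z, g z ∂μ - ∫ z, g z ∂ν| ≤ c) {F : Set Y} (hF : IsClosed F) :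
    |μ.real F - ν.real F| ≤ c := by
  have radius_pos (n : ℕ) : (0 : ℝ) < 1 / ((n : ℝ) + 1) := by positivity
  have tendsto_measure (κ : Measure Y) [IsFiniteMeasure κ] :=
    tendsto_integral_thickenedIndicator_of_isClosed κ hF radius_pos
      tendsto_one_div_add_atTop_nhds_zero_nat
  refine le_of_tendsto' ((tendsto_measure μ).sub (tendsto_measure ν)).abs fun n ↦ ?_
  exact h ⟨fun z ↦ thickenedIndicator (radius_pos n) F z, by fun_prop⟩
    (fun _ ↦ NNReal.coe_nonneg _) (fun z ↦ mod_cast thickenedIndicator_le_one (radius_pos n) F z)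

theorem IsSpectralMeasure.abs_measureReal_preimage_sub_le {Y : Type*} [PseudoEMetricSpace Y]
    [CompactSpace Y] [MeasurableSpace Y] [BorelSpace Y] {Ψ : C(Y, ℂ) →⋆ₐ[ℂ] (H →L[ℂ] H)} {v : H}
    {μ : Measure Y} [IsFiniteMeasure μ] (h : IsSpectralMeasure Ψ v μ)
    {W : unitary (H →L[ℂ] H)} {a : C(Y, Y)} (hW : IsCovariant Ψ W a) {F : Set Y}
    (hF : IsClosed F) :
    |μ.real (a ⁻¹' F) - μ.real F| ≤ 2 * ‖v‖ * ‖(W : H →L[ℂ] H) v - v‖ := by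
  rw [← map_measureReal_apply a.continuous.measurable hF.measurableSet]
  refine abs_measureReal_sub_le_of_forall_abs_integral_sub_le (fun g hg0 hg1 ↦ ?_) hF
  rw [integral_map a.continuous.aemeasurable g.continuous.aestronglyMeasurable]
  exact h.abs_integral_comp_sub_le hW hg0 hg1

end SpectralMeasure

section RootsAndCoefficients

open Polynomial

variable {K : Type*} [NormedField K] {R : ℝ}

theorem norm_coeff_prod_X_sub_C_mul_pow_le (hR : 0 ≤ R) (s : Multiset K)
    (hs : ∀ r ∈ s, R ≤ ‖r‖) (i : ℕ) :
    ‖((s.map fun r ↦ X - C r).prod).coeff i‖ * R ^ i ≤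
      s.card.choose i * ‖((s.map fun r ↦ X - C r).prod).coeff 0‖ := by
  induction s using Multiset.induction_on generalizing i with
  | empty => cases i <;> simp [coeff_one]
  | cons r s ih =>
    have hr : R ≤ ‖r‖ := hs r (Multiset.mem_cons_self r s)
    specialize ih fun r hr ↦ hs r (Multiset.mem_cons_of_mem hr)
    rw [Multiset.map_cons, Multiset.prod_cons, Multiset.card_cons]
    set Q := (s.map fun r ↦ X - C r).prod
    cases i with
    | zero => simp
    | succ i =>
      have coeff_zero : ‖((X - C r) * Q).coeff 0‖ = ‖r‖ * ‖Q.coeff 0‖ := by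
        simp [mul_coeff_zero]
      have coeff_succ : ‖((X - C r) * Q).coeff (i + 1)‖ ≤
          ‖Q.coeff i‖ + ‖r‖ * ‖Q.coeff (i + 1)‖ := by
        rw [sub_mul, coeff_sub, coeff_X_mul, coeff_C_mul, ← norm_mul]
        exact norm_sub_le _ _
      rw [coeff_zero, Nat.choose_succ_succ]
      calc ‖((X - C r) * Q).coeff (i + 1)‖ * R ^ (i + 1)
          ≤ (‖Q.coeff i‖ + ‖r‖ * ‖Q.coeff (i + 1)‖) * R ^ (i + 1) := by gcongr
        _ = R * (‖Q.coeff i‖ * R ^ i) + ‖r‖ * (‖Q.coeff (i + 1)‖ * R ^ (i + 1)) := by ring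
        _ ≤ ‖r‖ * (s.card.choose i * ‖Q.coeff 0‖) +
            ‖r‖ * (s.card.choose (i + 1) * ‖Q.coeff 0‖) := by
          gcongr ?_ * ?_ + _ * ?_
          exacts [ih i, ih (i + 1)]
        _ = _ := by push_cast; ring

theorem norm_coeff_mul_pow_le {p : K[X]} (hp : p.Splits) (hR : 0 ≤ R)
    (hroots : ∀ r ∈ p.roots, R ≤ ‖r‖) (i : ℕ) :
    ‖p.coeff i‖ * R ^ i ≤ p.natDegree.choose i * ‖p.coeff 0‖ := by
  have coeff_eq (j : ℕ) : ‖p.coeff j‖ =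
      ‖p.leadingCoeff‖ * ‖((p.roots.map fun r ↦ X - C r).prod).coeff j‖ := by
    conv_lhs => rw [hp.eq_prod_roots, coeff_C_mul, norm_mul]
  have roots_bound := norm_coeff_prod_X_sub_C_mul_pow_le hR p.roots hroots i
  rw [coeff_eq i, coeff_eq 0, hp.natDegree_eq_card_roots]
  linear_combination ‖p.leadingCoeff‖ * roots_bound

theorem exists_mem_roots_norm_lt_two {p : K[X]} (hp : p.Splits) (hp0 : p ≠ 0) {d i : ℕ}
    (hd : p.natDegree ≤ d) (hi0 : i ≠ 0) (hid : i ≤ d)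
    (h : d.choose i * ‖p.coeff 0‖ ≤ ‖p.coeff i‖) : ∃ r ∈ p.roots, ‖r‖ < 2 := by
  by_contra! hroots
  have coeff_zero_pos : 0 < ‖p.coeff 0‖ := by
    refine norm_pos_iff.mpr fun h0 ↦ ?_
    have := hroots 0 ((mem_roots hp0).mpr (by rwa [IsRoot.def, ← coeff_zero_eq_eval_zero]))
    norm_num at this
  have choose_pos : (0 : ℝ) < d.choose i := by exact_mod_cast Nat.choose_pos hid
  have two_le : (2 : ℝ) ≤ 2 ^ i := le_self_pow₀ one_le_two hi0
  have : ‖p.coeff i‖ * 2 ^ i ≤ d.choose i * ‖p.coeff 0‖ :=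
    (norm_coeff_mul_pow_le hp zero_le_two hroots i).trans
      (by gcongr)
  nlinarith [mul_pos choose_pos coeff_zero_pos]

theorem card_le_of_forall_exists_norm_sub_natCast_lt_two {s : Finset ℕ} {Z : Finset ℂ}
    (h : ∀ m ∈ s, ∃ z ∈ Z, ‖z - m‖ < 2) : s.card ≤ 4 * Z.card := by
  let near (z : ℂ) : Finset ℤ := Finset.Icc (⌊z.re⌋ - 1) (⌊z.re⌋ + 2)
  have mem_near {z : ℂ} {m : ℕ} (h : ‖z - m‖ < 2) : (m : ℤ) ∈ near z := by
    have re_bound := abs_lt.mp ((Complex.abs_re_le_norm _).trans_lt h)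
    rw [Complex.sub_re, Complex.natCast_re] at re_bound
    have floor_le := Int.floor_le z.re
    have lt_floor := Int.lt_floor_add_one z.re
    have lower : (⌊z.re⌋ : ℝ) < m + 2 := by linarith
    have upper : (m : ℝ) < ⌊z.re⌋ + 3 := by linarith
    norm_cast at lower upper
    rw [Finset.mem_Icc]
    constructor <;> grind
  calc s.card ≤ (Z.biUnion near).card :=
      Finset.card_le_card_of_injOn (Nat.cast : ℕ → ℤ) (fun m hm ↦ by
        obtain ⟨z, hz, hzm⟩ := h m hm
        exact Finset.mem_biUnion.mpr ⟨z, hz, mem_near hzm⟩) Nat.cast_injective.injOn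
    _ ≤ Z.card * 4 := Finset.card_biUnion_le_card_mul _ _ _ fun z _ ↦ by
        rw [Int.card_Icc]; omega
    _ = 4 * Z.card := mul_comm _ _

end RootsAndCoefficients

section UniversalCover

open scoped Matrix

variable {ι : Type*}

/-- The covering map of the torus `Circle ^ ι`. -/
noncomputable def torusExp (θ : ι → ℝ) : ι → Circle :=
  fun i ↦ Circle.exp (θ i)

theorem torusExp_zero : torusExp (0 : ι → ℝ) = 1 :=
  funext fun _ ↦ Circle.exp_zero

theorem continuous_torusExp : Continuous (torusExp (ι := ι)) :=
  continuous_pi fun i ↦ Circle.exp.continuous.comp (continuous_apply i)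

theorem torusExp_arg (z : ι → Circle) : torusExp (fun i ↦ Complex.arg (z i)) = z :=
  funext fun i ↦ Circle.exp_arg (z i)

variable [Fintype ι]

theorem injOn_torusExp_closedBall : Set.InjOn (torusExp (ι := ι)) (Metric.closedBall 0 1) := by
  intro θ hθ θ' hθ' h
  rw [mem_closedBall_zero_iff, pi_norm_le_iff_of_nonneg zero_le_one] at hθ hθ'
  have injOn_exp : Set.InjOn Circle.exp (Set.Icc (-1) 1) :=
    Circle.exp_injOn_Icc (by linarith [Real.pi_gt_three])
  exact funext fun i ↦ injOn_exp (abs_le.mp (hθ i)) (abs_le.mp (hθ' i)) (congrFun h i)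

/-- The linear lift of `torusMap A` to the universal cover `ι → ℝ` of the torus. -/
def coverMap (A : Matrix ι ι ℤ) (θ : ι → ℝ) : ι → ℝ :=
  A.map (Int.cast : ℤ → ℝ) *ᵥ θ

theorem coverMap_one [DecidableEq ι] (θ : ι → ℝ) : coverMap 1 θ = θ := by
  simp [coverMap]

theorem coverMap_mul (A B : Matrix ι ι ℤ) (θ : ι → ℝ) :
    coverMap (A * B) θ = coverMap A (coverMap B θ) := by
  simp [coverMap, Matrix.map_mul_intCast]

theorem continuous_coverMap (A : Matrix ι ι ℤ) : Continuous (coverMap A) :=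
  continuous_const.matrix_mulVec continuous_id

theorem coverMap_zero (A : Matrix ι ι ℤ) : coverMap A 0 = 0 :=
  Matrix.mulVec_zero _

theorem torusMap_torusExp (A : Matrix ι ι ℤ) (θ : ι → ℝ) :
    torusMap A (torusExp θ) = torusExp (coverMap A θ) := by
  funext i
  have exp_sum (x : ι → ℝ) : Circle.exp (∑ j, x j) = ∏ j, Circle.exp (x j) :=
    map_sum Circle.expHom x Finset.univ
  simp only [torusExp, coverMap, Matrix.mulVec, dotProduct, exp_sum, Matrix.map_apply,
    ← zsmul_eq_mul, Circle.exp_zsmul]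
  rfl

theorem exists_radius_coverMap_mem_closedBall {κ : Type*} (s : Finset κ)
    (A : κ → Matrix ι ι ℤ) :
    ∃ r, 0 < r ∧ r ≤ 1 ∧ ∀ k ∈ s, ∀ θ ∈ Metric.closedBall (0 : ι → ℝ) r,
      coverMap (A k) θ ∈ Metric.closedBall (0 : ι → ℝ) 1 := by
  have eventually_mem (k : κ) :
      ∀ᶠ θ in nhds (0 : ι → ℝ), coverMap (A k) θ ∈ Metric.closedBall (0 : ι → ℝ) 1 :=
    (continuous_coverMap (A k)).continuousAt.eventually_mem
      (by rw [coverMap_zero]; exact Metric.closedBall_mem_nhds 0 one_pos)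
  obtain ⟨r, r_pos, hr⟩ := Metric.nhds_basis_closedBall.eventually_iff.mp <|
    (Filter.eventually_all_finset s).mpr fun k _ ↦ eventually_mem k
  exact ⟨min r 1, lt_min r_pos one_pos, min_le_right r 1, fun k hk θ hθ ↦
    hr (Metric.closedBall_subset_closedBall (min_le_left r 1) hθ) k hk⟩

end UniversalCover

section UnipotentOrbits

open Polynomial

variable {d : ℕ}

/-- The matrix of `X ↦ X, Y ↦ X + Y` on the monomials `X ^ i * Y ^ (d - i)`. -/
def unipotentMatrix (d : ℕ) : Matrix (Fin (d + 1)) (Fin (d + 1)) ℤ :=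
  .of fun i j ↦ ((d - i).choose (d - j) : ℕ)

/-- The polynomial with coefficients `d.choose j * θ j`. Its role is that `unipotentMatrix d`
acts on these polynomials as a translation of the variable. -/
noncomputable def binomialPolynomial (θ : Fin (d + 1) → ℝ) : ℂ[X] :=
  ∑ j : Fin (d + 1), monomial j ((d.choose j : ℂ) * θ j)

theorem coeff_binomialPolynomial (θ : Fin (d + 1) → ℝ) (i : Fin (d + 1)) :
    (binomialPolynomial θ).coeff i = d.choose i * θ i := by
  rw [binomialPolynomial, finsetSum_coeff, Finset.sum_eq_single i]
  · simp
  · exact fun j _ hj ↦ by rw [coeff_monomial, if_neg fun h ↦ hj (Fin.ext h)]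
  · simp

theorem natDegree_binomialPolynomial_le (θ : Fin (d + 1) → ℝ) :
    (binomialPolynomial θ).natDegree ≤ d :=
  natDegree_sum_le_of_forall_le _ _ fun j _ ↦
    (natDegree_monomial_le _).trans (Nat.lt_succ_iff.mp j.2)

theorem binomialPolynomial_ne_zero {θ : Fin (d + 1) → ℝ} (hθ : θ ≠ 0) :
    binomialPolynomial θ ≠ 0 := by
  obtain ⟨i, hi⟩ := Function.ne_iff.mp hθ
  have choose_ne_zero : d.choose i ≠ 0 := (Nat.choose_pos (Nat.lt_succ_iff.mp i.2)).ne'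
  refine fun h ↦ hi ?_
  simpa [h, choose_ne_zero] using coeff_binomialPolynomial θ i

theorem taylor_one_binomialPolynomial (θ : Fin (d + 1) → ℝ) :
    taylor 1 (binomialPolynomial θ) = binomialPolynomial (coverMap (unipotentMatrix d) θ) := by
  have choose_mul_choose (i j : Fin (d + 1)) :
      d.choose j * (j : ℕ).choose i = d.choose i * (d - i).choose (d - j) := by
    rcases le_or_gt (i : ℕ) j with hij | hij
    · rw [Nat.choose_mul hij, ← Nat.choose_symm (by omega : (j : ℕ) - i ≤ d - i)]
      congr 2
      omega
    · have := i.2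
      rw [Nat.choose_eq_zero_of_lt hij,
        Nat.choose_eq_zero_of_lt (by omega : d - (i : ℕ) < d - j), mul_zero, mul_zero]
  have coeff_eq (i : Fin (d + 1)) : (taylor 1 (binomialPolynomial θ)).coeff i =
      (binomialPolynomial (coverMap (unipotentMatrix d) θ)).coeff i := by
    rw [coeff_binomialPolynomial, taylor_coeff, binomialPolynomial, map_sum, eval_finsetSum]
    simp only [hasseDeriv_monomial, eval_monomial, one_pow, mul_one, coverMap, Matrix.mulVec,
      dotProduct, Complex.ofReal_sum, Finset.mul_sum]
    refine Finset.sum_congr rfl fun j _ ↦ ?_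
    have := congrArg (Nat.cast : ℕ → ℂ) (choose_mul_choose i j)
    push_cast at this
    simp only [unipotentMatrix, Matrix.map_apply, Matrix.of_apply]
    push_cast
    linear_combination (θ j : ℂ) * this
  ext k
  by_cases hk : k < d + 1
  · exact coeff_eq ⟨k, hk⟩
  · rw [coeff_eq_zero_of_natDegree_lt, coeff_eq_zero_of_natDegree_lt]
    · exact (natDegree_binomialPolynomial_le _).trans_lt (by omega)
    · rw [natDegree_taylor]
      exact (natDegree_binomialPolynomial_le _).trans_lt (by omega)

theorem taylor_natCast_binomialPolynomial (m : ℕ) (θ : Fin (d + 1) → ℝ) :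
    taylor (m : ℂ) (binomialPolynomial θ) =
      binomialPolynomial (coverMap (unipotentMatrix d ^ m) θ) := by
  induction m with
  | zero => simp [coverMap_one]
  | succ m ih =>
    rw [pow_succ', coverMap_mul, ← taylor_one_binomialPolynomial, ← ih, taylor_taylor,
      Nat.cast_succ, add_comm]

theorem coverMap_unipotentMatrix_pow_ne_zero {θ : Fin (d + 1) → ℝ} (hθ : θ ≠ 0) (m : ℕ) :
    coverMap (unipotentMatrix d ^ m) θ ≠ 0 := by
  intro h
  have taylor_eq := taylor_natCast_binomialPolynomial m θ
  rw [h, show binomialPolynomial (0 : Fin (d + 1) → ℝ) = 0 by simp [binomialPolynomial]]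
    at taylor_eq
  exact binomialPolynomial_ne_zero hθ (taylor_injective _ (taylor_eq.trans (map_zero _).symm))

/-- The vectors whose coordinate of index `0` is not strictly dominant. -/
def offDominantCone (d : ℕ) : Set (Fin (d + 1) → ℝ) :=
  {θ | ∃ i ≠ 0, |θ 0| ≤ |θ i|}

theorem isClosed_offDominantCone : IsClosed (offDominantCone d) := by
  have eq_iUnion : offDominantCone d = ⋃ i : {i : Fin (d + 1) // i ≠ 0}, {θ | |θ 0| ≤ |θ i|} := by
    ext; simp [offDominantCone]
  rw [eq_iUnion]
  exact isClosed_iUnion_of_finite fun i ↦ isClosed_le (by fun_prop) (by fun_prop)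

theorem exists_root_binomialPolynomial_norm_lt_two {θ : Fin (d + 1) → ℝ} (hθ : θ ≠ 0)
    (h : θ ∈ offDominantCone d) : ∃ r ∈ (binomialPolynomial θ).roots, ‖r‖ < 2 := by
  obtain ⟨i, hi, hle⟩ := h
  refine exists_mem_roots_norm_lt_two (IsAlgClosed.splits _) (binomialPolynomial_ne_zero hθ)
    (natDegree_binomialPolynomial_le θ) (Fin.val_ne_zero_iff.mpr hi) (Nat.lt_succ_iff.mp i.2) ?_
  have coeff_zero := coeff_binomialPolynomial θ 0
  rw [Fin.val_zero] at coeff_zero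
  simpa [coeff_zero, coeff_binomialPolynomial] using
    mul_le_mul_of_nonneg_left hle (Nat.cast_nonneg _)

/-- The `m`-th point of the orbit can lie in the cone only if `m` is close to one of the at most
`d` roots of `binomialPolynomial θ`. -/
theorem card_le_of_forall_coverMap_mem_offDominantCone {θ : Fin (d + 1) → ℝ} (hθ : θ ≠ 0)
    {s : Finset ℕ} (hs : ∀ m ∈ s, coverMap (unipotentMatrix d ^ m) θ ∈ offDominantCone d) :
    s.card ≤ 4 * d := by
  let roots : Finset ℂ := (binomialPolynomial θ).roots.toFinset
  have card_roots_le : roots.card ≤ d := (Multiset.toFinset_card_le _).trans <|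
    (card_roots' _).trans (natDegree_binomialPolynomial_le θ)
  have exists_root_near (m : ℕ) (hm : m ∈ s) : ∃ z ∈ roots, ‖z - m‖ < 2 := by
    obtain ⟨r, hr, norm_lt⟩ := exists_root_binomialPolynomial_norm_lt_two
      (coverMap_unipotentMatrix_pow_ne_zero hθ m) (hs m hm)
    rw [← taylor_natCast_binomialPolynomial, mem_roots', IsRoot.def, taylor_eval] at hr
    refine ⟨r + m, ?_, by simpa using norm_lt⟩
    exact Multiset.mem_toFinset.mpr (mem_roots'.mpr ⟨binomialPolynomial_ne_zero hθ, hr.2⟩)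
  exact (card_le_of_forall_exists_norm_sub_natCast_lt_two exists_root_near).trans (by gcongr)

end UnipotentOrbits

section TorusBoxes

variable {ι : Type*} [Fintype ι]

/-- The image in the torus of the cube of side `2 * r` centred at `0`. -/
def torusBox (ι : Type*) [Fintype ι] (r : ℝ) : Set (ι → Circle) :=
  torusExp '' Metric.closedBall 0 r

theorem isClosed_torusBox (r : ℝ) : IsClosed (torusBox ι r) :=
  ((isCompact_closedBall 0 r).image continuous_torusExp).isClosed

theorem exists_forall_norm_sub_one_lt_mem_torusBox {r : ℝ} (hr : 0 < r) :
    ∃ δ > 0, ∀ z : ι → Circle, (∀ i, ‖(z i : ℂ) - 1‖ < δ) → z ∈ torusBox ι r := by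
  obtain ⟨δ, δ_pos, hδ⟩ := Metric.continuousAt_iff.mp (Complex.continuousAt_arg (x := 1) (by simp))
    r hr
  refine ⟨δ, δ_pos, fun z hz ↦ ⟨fun i ↦ Complex.arg (z i), ?_, torusExp_arg z⟩⟩
  rw [mem_closedBall_zero_iff, pi_norm_le_iff_of_nonneg hr.le]
  intro i
  have dist_lt := hδ (x := (z i : ℂ)) (by simpa only [dist_eq_norm] using hz i)
  rw [Complex.arg_one, dist_zero_right] at dist_lt
  exact dist_lt.le

variable {d : ℕ}

/-- The image in the torus of the part of the cube lying in `offDominantCone d`. -/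
def torusCone (d : ℕ) (r : ℝ) : Set (Fin (d + 1) → Circle) :=
  torusExp '' (Metric.closedBall 0 r ∩ offDominantCone d)

theorem isClosed_torusCone (r : ℝ) : IsClosed (torusCone d r) :=
  (((isCompact_closedBall 0 r).inter_right isClosed_offDominantCone).image
    continuous_torusExp).isClosed

/-- Starting from the first visit to `torusCone d r`, the orbit lifts to the universal cover. -/
theorem card_le_of_forall_torusMap_mem_torusCone {M : ℕ} {r : ℝ} (hr1 : r ≤ 1)
    (hr : ∀ m ∈ Finset.range M, ∀ θ ∈ Metric.closedBall 0 r,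
      coverMap (unipotentMatrix d ^ m) θ ∈ Metric.closedBall 0 1) {z : Fin (d + 1) → Circle}
    {s : Finset ℕ} (hsM : s ⊆ Finset.range M)
    (hs : ∀ m ∈ s, torusMap (unipotentMatrix d ^ m) z ∈ torusCone d r \ {1}) :
    s.card ≤ 4 * d := by
  obtain rfl | s_nonempty := s.eq_empty_or_nonempty
  · simp
  set first := s.min' s_nonempty
  have first_le {m : ℕ} (hm : m ∈ s) : first ≤ m := s.min'_le m hm
  obtain ⟨⟨θ, ⟨hθ, -⟩, torusExp_θ⟩, ne_one⟩ := hs first (s.min'_mem s_nonempty)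
  have θ_ne_zero : θ ≠ 0 := by
    rintro rfl
    exact ne_one (torusExp_θ.symm.trans torusExp_zero)
  have mem_offDominantCone {m : ℕ} (hm : m ∈ s) :
      coverMap (unipotentMatrix d ^ (m - first)) θ ∈ offDominantCone d := by
    obtain ⟨⟨θ', ⟨hθ', mem_cone⟩, torusExp_θ'⟩, -⟩ := hs m hm
    have sub_mem : m - first ∈ Finset.range M :=
      Finset.mem_range.mpr ((Nat.sub_le m first).trans_lt (Finset.mem_range.mp (hsM hm)))
    have torusExp_eq : torusExp θ' = torusExp (coverMap (unipotentMatrix d ^ (m - first)) θ) := by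
      rw [torusExp_θ', ← torusMap_torusExp, torusExp_θ, ← ContinuousMap.comp_apply,
        torusMap_comp, ← pow_add, Nat.sub_add_cancel (first_le hm)]
    exact injOn_torusExp_closedBall (Metric.closedBall_subset_closedBall hr1 hθ')
      (hr _ sub_mem θ hθ) torusExp_eq ▸ mem_cone
  have injOn_sub : Set.InjOn (· - first) (s : Set ℕ) :=
    fun a ha b hb ↦ (tsub_left_inj (first_le ha) (first_le hb)).mp
  rw [← Finset.card_image_of_injOn injOn_sub]
  refine card_le_of_forall_coverMap_mem_offDominantCone θ_ne_zero fun k hk ↦ ?_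
  obtain ⟨m, hm, rfl⟩ := Finset.mem_image.mp hk
  exact mem_offDominantCone hm

/-- The matrix of `X ↦ Y, Y ↦ -X` on the monomials `X ^ i * Y ^ (d - i)`. -/
def weylMatrix (d : ℕ) : Matrix (Fin (d + 1)) (Fin (d + 1)) ℤ :=
  .of fun i j ↦ if j = i.rev then (-1) ^ (d - i : ℕ) else 0

theorem abs_coverMap_weylMatrix (θ : Fin (d + 1) → ℝ) (i : Fin (d + 1)) :
    |coverMap (weylMatrix d) θ i| = |θ i.rev| := by
  rw [coverMap, Matrix.mulVec, dotProduct, Finset.sum_eq_single i.rev]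
  · simp [weylMatrix, abs_mul]
  · exact fun j _ hj ↦ by simp [weylMatrix, hj]
  · simp

theorem torusBox_subset (hd : d ≠ 0) (r : ℝ) :
    torusBox (Fin (d + 1)) r ⊆ torusCone d r ∪ torusMap (weylMatrix d) ⁻¹' torusCone d r := by
  rintro _ ⟨θ, hθ, rfl⟩
  by_cases mem_cone : θ ∈ offDominantCone d
  · exact Or.inl ⟨θ, ⟨hθ, mem_cone⟩, rfl⟩
  · refine Or.inr ⟨coverMap (weylMatrix d) θ, ⟨?_, Fin.last d, ?_, ?_⟩,
      (torusMap_torusExp _ θ).symm⟩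
    · rw [mem_closedBall_zero_iff] at hθ ⊢
      refine (pi_norm_le_iff_of_nonneg ((norm_nonneg θ).trans hθ)).mpr fun i ↦ ?_
      rw [Real.norm_eq_abs, abs_coverMap_weylMatrix]
      exact (norm_le_pi_norm θ i.rev).trans hθ
    · exact Fin.val_ne_zero_iff.mp hd
    · simp only [offDominantCone, Set.mem_ofPred_eq, not_exists, not_and, not_le] at mem_cone
      rw [abs_coverMap_weylMatrix, abs_coverMap_weylMatrix, Fin.rev_last, Fin.rev_zero]
      exact (mem_cone _ (Fin.val_ne_zero_iff.mp hd)).le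

end TorusBoxes

section SeveralFunctions

variable {ι X H : Type*} [TopologicalSpace X] [CompactSpace X] [MeasurableSpace X] [BorelSpace X]
  [NormedAddCommGroup H] [InnerProductSpace ℂ H] [CompleteSpace H]
  {Ψ : C(X, ℂ) →⋆ₐ[ℂ] (H →L[ℂ] H)} {v : H} {μ : Measure X} [IsFiniteMeasure μ]

theorem IsSpectralMeasure.measureReal_common_zeros_eq_zero [Finite ι]
    (h : IsSpectralMeasure Ψ v μ) {f : ι → C(X, ℂ)} (hf : ∀ w, (∀ i, Ψ (f i) w = 0) → w = 0) :
    μ.real {z | ∀ i, f i z = 0} = 0 := by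
  have := Fintype.ofFinite ι
  let g : C(X, ℂ) := ∑ i, star (f i) * f i
  have g_apply (z : X) : g z = (∑ i, ‖f i z‖ ^ 2 : ℝ) := by
    simp [g, ContinuousMap.sum_apply, RCLike.star_def, Complex.conj_mul']
  have zeros_eq : {z | ∀ i, f i z = 0} = {z | g z = 0} := by
    ext z
    simp only [Set.mem_ofPred_eq, g_apply, Complex.ofReal_eq_zero,
      Finset.sum_eq_zero_iff_of_nonneg fun i _ ↦ sq_nonneg ‖f i z‖, Finset.mem_univ, true_imp_iff,
      sq_eq_zero_iff, norm_eq_zero]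
  rw [zeros_eq]
  refine h.measureReal_zeros_eq_zero fun w hw ↦ hf w fun i ↦ ?_
  have sum_norm_sq : ∑ i, ‖Ψ (f i) w‖ ^ 2 = 0 := by
    calc ∑ i, ‖Ψ (f i) w‖ ^ 2 = ∑ i, (⟪w, Ψ (star (f i) * f i) w⟫_ℂ).re :=
          Finset.sum_congr rfl fun i _ ↦ (re_inner_apply_eq_norm_sq Ψ w fun z ↦ by
            simp [RCLike.star_def, Complex.conj_mul']).symm
      _ = (⟪w, Ψ g w⟫_ℂ).re := by
          simp only [g, map_sum, sum_apply, inner_sum, Complex.re_sum]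
      _ = 0 := by simp [hw]
  simpa using (Finset.sum_eq_zero_iff_of_nonneg fun i _ ↦ sq_nonneg ‖Ψ (f i) w‖).mp sum_norm_sq i
    (Finset.mem_univ i)

theorem IsSpectralMeasure.sq_mul_measureReal_exists_le [Fintype ι] (h : IsSpectralMeasure Ψ v μ)
    (f : ι → C(X, ℂ)) {δ : ℝ} (hδ : 0 ≤ δ) :
    δ ^ 2 * μ.real {z | ∃ i, δ ≤ ‖f i z‖} ≤ ∑ i, ‖Ψ (f i) v‖ ^ 2 := by
  calc δ ^ 2 * μ.real {z | ∃ i, δ ≤ ‖f i z‖}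
      = δ ^ 2 * μ.real (⋃ i, {z | δ ≤ ‖f i z‖}) := by rw [Set.ofPred_exists]
    _ ≤ δ ^ 2 * ∑ i, μ.real {z | δ ≤ ‖f i z‖} := by gcongr; exact measureReal_iUnion_fintype_le _
    _ ≤ ∑ i, ‖Ψ (f i) v‖ ^ 2 := by
      rw [Finset.mul_sum]
      exact Finset.sum_le_sum fun i _ ↦ h.sq_mul_measureReal_le (f i) hδ

end SeveralFunctions

section MeasureNearIdentity

variable {ι Γ H : Type*} [Fintype ι] [CommGroup Γ] [NormedAddCommGroup H]
  [InnerProductSpace ℂ H] [CompleteSpace H] {ρ : Γ →* unitary (H →L[ℂ] H)} {x : ι → Γ}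
  {Ψ : C(ι → Circle, ℂ) →⋆ₐ[ℂ] (H →L[ℂ] H)}

theorem apply_torusChar_single_sub_one [DecidableEq ι]
    (hΨ : ∀ c, Ψ (torusChar c) = (ρ (zpowProd x c) : H →L[ℂ] H)) (i : ι) (v : H) :
    Ψ (torusChar (Pi.single i 1) - 1) v = (ρ (x i) : H →L[ℂ] H) v - v := by
  rw [map_sub, map_one, hΨ, zpowProd_single]
  rfl

variable [MeasurableSpace (ι → Circle)] [BorelSpace (ι → Circle)] {μ : Measure (ι → Circle)}
  [IsFiniteMeasure μ] {v : H}

theorem measureReal_singleton_one_eq_zero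
    (hΨ : ∀ c, Ψ (torusChar c) = (ρ (zpowProd x c) : H →L[ℂ] H)) (hμ : IsSpectralMeasure Ψ v μ)
    (hx : ∀ w, (∀ i, (ρ (x i) : H →L[ℂ] H) w = w) → w = 0) : μ.real {1} = 0 := by
  classical
  have singleton_eq : ({1} : Set (ι → Circle)) =
      {z | ∀ i, (torusChar (Pi.single i 1) - 1 : C(ι → Circle, ℂ)) z = 0} := by
    ext z
    simp [torusChar_single_apply, sub_eq_zero, funext_iff, ← Circle.coe_eq_one]
  rw [singleton_eq]
  refine hμ.measureReal_common_zeros_eq_zero fun w hw ↦ hx w fun i ↦ ?_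
  rw [← sub_eq_zero, ← apply_torusChar_single_sub_one hΨ]
  exact hw i

theorem sq_mul_measureReal_compl_torusBox_le
    (hΨ : ∀ c, Ψ (torusChar c) = (ρ (zpowProd x c) : H →L[ℂ] H)) (hμ : IsSpectralMeasure Ψ v μ)
    {r δ ε : ℝ} (hδ : 0 ≤ δ)
    (hr : ∀ z : ι → Circle, (∀ i, ‖(z i : ℂ) - 1‖ < δ) → z ∈ torusBox ι r)
    (hx : ∀ i, ‖(ρ (x i) : H →L[ℂ] H) v - v‖ ≤ ε) :
    δ ^ 2 * μ.real (torusBox ι r)ᶜ ≤ Fintype.card ι * ε ^ 2 := by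
  classical
  let f (i : ι) : C(ι → Circle, ℂ) := torusChar (Pi.single i 1) - 1
  have compl_subset : (torusBox ι r)ᶜ ⊆ {z | ∃ i, δ ≤ ‖f i z‖} := by
    intro z hz
    by_contra far
    refine hz (hr z fun i ↦ ?_)
    simpa [f, torusChar_single_apply] using not_le.mp fun hi ↦ far ⟨i, hi⟩
  calc δ ^ 2 * μ.real (torusBox ι r)ᶜ ≤ δ ^ 2 * μ.real {z | ∃ i, δ ≤ ‖f i z‖} := by
        exact mul_le_mul_of_nonneg_left (measureReal_mono compl_subset) (sq_nonneg δ)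
    _ ≤ ∑ i, ‖Ψ (f i) v‖ ^ 2 := hμ.sq_mul_measureReal_exists_le f hδ
    _ ≤ ∑ _i : ι, ε ^ 2 := by
        gcongr with i
        rw [apply_torusChar_single_sub_one hΨ]
        exact hx i
    _ = Fintype.card ι * ε ^ 2 := by simp

theorem measureReal_compl_torusBox_le
    (hΨ : ∀ c, Ψ (torusChar c) = (ρ (zpowProd x c) : H →L[ℂ] H)) (hμ : IsSpectralMeasure Ψ v μ)
    {r δ ε : ℝ} (hδ : 0 < δ)
    (hr : ∀ z : ι → Circle, (∀ i, ‖(z i : ℂ) - 1‖ < δ) → z ∈ torusBox ι r)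
    (hε : 0 ≤ ε) (hεδ : ε * (2 * Fintype.card ι) ≤ δ)
    (hx : ∀ i, ‖(ρ (x i) : H →L[ℂ] H) v - v‖ ≤ ε) :
    μ.real (torusBox ι r)ᶜ ≤ 1 / 4 := by
  have card_le_sq : (Fintype.card ι : ℝ) ≤ Fintype.card ι ^ 2 := by
    exact_mod_cast Nat.le_self_pow two_ne_zero (Fintype.card ι)
  refine le_of_mul_le_mul_left ?_ (sq_pos_of_pos hδ)
  calc δ ^ 2 * μ.real (torusBox ι r)ᶜ ≤ Fintype.card ι * ε ^ 2 :=
        sq_mul_measureReal_compl_torusBox_le hΨ hμ hδ.le hr hx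
    _ ≤ Fintype.card ι ^ 2 * ε ^ 2 := by gcongr
    _ = (ε * (2 * Fintype.card ι)) ^ 2 * (1 / 4) := by ring
    _ ≤ δ ^ 2 * (1 / 4) := by gcongr

end MeasureNearIdentity

section AlmostInvariantMeasures

section Counting

variable {κ X : Type*} [MeasurableSpace X] {μ : Measure X} [IsFiniteMeasure μ] {s : Finset κ}
  {N : ℕ}

theorem sum_measureReal_le_of_forall_card_le {E : κ → Set X} (hE : ∀ k ∈ s, MeasurableSet (E k))
    (hN : ∀ z, ∀ t ⊆ s, (∀ k ∈ t, z ∈ E k) → t.card ≤ N) :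
    ∑ k ∈ s, μ.real (E k) ≤ N * μ.real Set.univ := by
  classical
  have integrable (k : κ) (hk : k ∈ s) : Integrable ((E k).indicator (1 : X → ℝ)) μ :=
    (integrable_const (1 : ℝ)).indicator (hE k hk)
  have sum_indicator_le (z : X) : ∑ k ∈ s, (E k).indicator (1 : X → ℝ) z ≤ N := by
    simpa [Set.indicator_apply, Finset.sum_boole] using
      hN z (s.filter fun k ↦ z ∈ E k) (Finset.filter_subset _ s) (by simp)
  calc ∑ k ∈ s, μ.real (E k) = ∑ k ∈ s, ∫ z, (E k).indicator (1 : X → ℝ) z ∂μ :=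
        Finset.sum_congr rfl fun k hk ↦ (integral_indicator_one (hE k hk)).symm
    _ = ∫ z, ∑ k ∈ s, (E k).indicator (1 : X → ℝ) z ∂μ := (integral_finsetSum _ integrable).symm
    _ ≤ ∫ _, (N : ℝ) ∂μ := integral_mono (integrable_finsetSum _ integrable)
        (integrable_const _) sum_indicator_le
    _ = N * μ.real Set.univ := by simp [mul_comm]

theorem card_mul_measureReal_sub_le {a : κ → X → X} (ha : ∀ k ∈ s, Measurable (a k))
    {K Z : Set X} (hK : MeasurableSet K) (hZ : MeasurableSet Z) {η : ℝ}
    (hKη : ∀ k ∈ s, μ.real K - η ≤ μ.real (a k ⁻¹' K)) (hZη : ∀ k ∈ s, μ.real (a k ⁻¹' Z) ≤ η)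
    (hN : ∀ z, ∀ t ⊆ s, (∀ k ∈ t, a k z ∈ K \ Z) → t.card ≤ N) :
    s.card * (μ.real K - 2 * η) ≤ N * μ.real Set.univ := by
  have sub_le (k : κ) (hk : k ∈ s) : μ.real K - 2 * η ≤ μ.real (a k ⁻¹' (K \ Z)) := by
    have := le_measureReal_sdiff (μ := μ) (s₁ := a k ⁻¹' K) (s₂ := a k ⁻¹' Z)
    rw [Set.preimage_sdiff]
    linarith [hKη k hk, hZη k hk]
  calc s.card * (μ.real K - 2 * η) = ∑ _k ∈ s, (μ.real K - 2 * η) := by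
        rw [Finset.sum_const, nsmul_eq_mul]
    _ ≤ ∑ k ∈ s, μ.real (a k ⁻¹' (K \ Z)) := Finset.sum_le_sum sub_le
    _ ≤ N * μ.real Set.univ :=
      sum_measureReal_le_of_forall_card_le (fun k hk ↦ ha k hk (hK.diff hZ)) hN

end Counting

variable {d : ℕ} [MeasurableSpace (Fin (d + 1) → Circle)] [BorelSpace (Fin (d + 1) → Circle)]
  {μ : Measure (Fin (d + 1) → Circle)} [IsProbabilityMeasure μ]

theorem measureReal_torusBox_le (hd : d ≠ 0) {r η : ℝ} (hr1 : r ≤ 1)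
    (hr : ∀ m ∈ Finset.range (32 * d), ∀ θ ∈ Metric.closedBall 0 r,
      coverMap (unipotentMatrix d ^ m) θ ∈ Metric.closedBall 0 1)
    (hone : μ.real {1} = 0)
    (hU : ∀ m ∈ Finset.range (32 * d), ∀ F, IsClosed F →
      |μ.real (torusMap (unipotentMatrix d ^ m) ⁻¹' F) - μ.real F| ≤ η)
    (hW : ∀ F, IsClosed F → |μ.real (torusMap (weylMatrix d) ⁻¹' F) - μ.real F| ≤ η) :
    μ.real (torusBox (Fin (d + 1)) r) ≤ 1 / 4 + 5 * η := by
  let K := torusCone d r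
  have measureReal_cone_le : μ.real K ≤ 1 / 8 + 2 * η := by
    have card_mul_le := card_mul_measureReal_sub_le (μ := μ) (η := η)
      (fun m _ ↦ (torusMap (unipotentMatrix d ^ m)).continuous.measurable)
      (isClosed_torusCone r).measurableSet isClosed_singleton.measurableSet
      (fun m hm ↦ by linarith [(abs_le.mp (hU m hm K (isClosed_torusCone r))).1])
      (fun m hm ↦ by linarith [(abs_le.mp (hU m hm {1} isClosed_singleton)).2])
      fun z t ↦ card_le_of_forall_torusMap_mem_torusCone hr1 hr
    rw [Finset.card_range, probReal_univ] at card_mul_le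
    push_cast at card_mul_le
    have d_pos : (0 : ℝ) < d := Nat.cast_pos.mpr (Nat.pos_of_ne_zero hd)
    have : 32 * (μ.real K - 2 * η) ≤ 4 := le_of_mul_le_mul_left (by linarith) d_pos
    linarith
  calc μ.real (torusBox (Fin (d + 1)) r) ≤ μ.real (K ∪ torusMap (weylMatrix d) ⁻¹' K) :=
        measureReal_mono (torusBox_subset hd r)
    _ ≤ μ.real K + μ.real (torusMap (weylMatrix d) ⁻¹' K) := measureReal_union_le _ _
    _ ≤ μ.real K + (μ.real K + η) := by
        linarith [(abs_le.mp (hW K (isClosed_torusCone r))).2]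
    _ ≤ 1 / 4 + 5 * η := by linarith

end AlmostInvariantMeasures

section FixedVectors

universe u w

theorem IsSpectralMeasure.measureReal_torusBox_le {d : ℕ} (hd : d ≠ 0) {H : Type*}
    [NormedAddCommGroup H] [InnerProductSpace ℂ H] [CompleteSpace H]
    [MeasurableSpace (Fin (d + 1) → Circle)] [BorelSpace (Fin (d + 1) → Circle)]
    {μ : Measure (Fin (d + 1) → Circle)} [IsFiniteMeasure μ]
    {Ψ : C(Fin (d + 1) → Circle, ℂ) →⋆ₐ[ℂ] (H →L[ℂ] H)} {v : H} (hμ : IsSpectralMeasure Ψ v μ)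
    (hv : ‖v‖ = 1) (hone : μ.real {1} = 0) {r : ℝ} (hr1 : r ≤ 1)
    (hr : ∀ m ∈ Finset.range (32 * d), ∀ θ ∈ Metric.closedBall 0 r,
      coverMap (unipotentMatrix d ^ m) θ ∈ Metric.closedBall 0 1)
    {U W : unitary (H →L[ℂ] H)} (hU : IsCovariant Ψ U (torusMap (unipotentMatrix d)))
    (hW : IsCovariant Ψ W (torusMap (weylMatrix d))) {ε : ℝ} (hε : 1280 * d * ε ≤ 1)
    (hUv : ‖(U : H →L[ℂ] H) v - v‖ ≤ ε) (hWv : ‖(W : H →L[ℂ] H) v - v‖ ≤ ε) :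
    μ.real (torusBox (Fin (d + 1)) r) ≤ 1 / 2 := by
  have := hμ.isProbabilityMeasure hv
  have one_le_d : (1 : ℝ) ≤ d := Nat.one_le_cast.mpr (Nat.one_le_iff_ne_zero.mpr hd)
  have : 0 ≤ ε := (norm_nonneg _).trans hUv
  have almost_invariant {V : unitary (H →L[ℂ] H)}
      {a : C(Fin (d + 1) → Circle, Fin (d + 1) → Circle)}
      (hV : IsCovariant Ψ V a) (hVv : ‖(V : H →L[ℂ] H) v - v‖ ≤ 1 / 40)
      (F : Set (Fin (d + 1) → Circle)) (hF : IsClosed F) :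
      |μ.real (a ⁻¹' F) - μ.real F| ≤ 1 / 20 :=
    (hμ.abs_measureReal_preimage_sub_le hV hF).trans (by rw [hv]; linarith)
  have pow_apply_sub_le (m : ℕ) (hm : m ∈ Finset.range (32 * d)) :
      ‖((U ^ m : unitary (H →L[ℂ] H)) : H →L[ℂ] H) v - v‖ ≤ 1 / 40 := by
    have m_le : (m : ℝ) ≤ 32 * d := by exact_mod_cast (Finset.mem_range.mp hm).le
    calc _ ≤ m * ‖(U : H →L[ℂ] H) v - v‖ := norm_pow_apply_sub_le U v m
      _ ≤ 32 * d * ε := by gcongr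
      _ ≤ 1 / 40 := by linarith
  have box_le := RelativeT.measureReal_torusBox_le hd hr1 hr hone
    (fun m hm ↦ almost_invariant (hU.torusMap_pow m) (pow_apply_sub_le m hm))
    (almost_invariant hW (hWv.trans (by nlinarith)))
  linarith

/-- If no nonzero vector is fixed, then the spectral measure of an almost invariant unit vector has
no atom at `1`. It gives little mass to the complement of a small box around `1` because the vector
is almost fixed by the `ρ (x i)`, and little mass to the box because it is almost invariant under
the two automorphisms of the torus. -/
theorem exists_forall_exists_ne_zero_fixed {d : ℕ} (hd : d ≠ 0) :
    ∃ ε > 0, ∀ {Γ : Type u} {H : Type w} [CommGroup Γ] [NormedAddCommGroup H]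
      [InnerProductSpace ℂ H] [CompleteSpace H] {ρ : Γ →* unitary (H →L[ℂ] H)}
      {x : Fin (d + 1) → Γ} {U W : unitary (H →L[ℂ] H)},
      (∀ i, U * ρ (x i) * U⁻¹ = ρ (zpowProd x (unipotentMatrix d i))) →
      (∀ i, W * ρ (x i) * W⁻¹ = ρ (zpowProd x (weylMatrix d i))) →
      ∀ {v : H}, ‖v‖ = 1 → (∀ i, ‖(ρ (x i) : H →L[ℂ] H) v - v‖ ≤ ε) →
        ‖(U : H →L[ℂ] H) v - v‖ ≤ ε → ‖(W : H →L[ℂ] H) v - v‖ ≤ ε →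
        ∃ w ≠ 0, ∀ i, (ρ (x i) : H →L[ℂ] H) w = w := by
  obtain ⟨r, r_pos, r_le_one, hr⟩ := exists_radius_coverMap_mem_closedBall
    (Finset.range (32 * d)) fun m ↦ unipotentMatrix d ^ m
  obtain ⟨δ, δ_pos, hδ⟩ := exists_forall_norm_sub_one_lt_mem_torusBox (ι := Fin (d + 1)) r_pos
  have : (0 : ℝ) < d := Nat.cast_pos.mpr (Nat.pos_of_ne_zero hd)
  set ε : ℝ := min (1 / (1280 * d)) (δ / (2 * (d + 1)))
  have ε_pos : 0 < ε := by positivity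
  have ε_mul_le : 1280 * d * ε ≤ 1 :=
    (mul_comm _ _).trans_le ((le_div_iff₀ (by positivity)).mp (min_le_left _ _))
  have ε_mul_le_δ : ε * (2 * (d + 1)) ≤ δ := (le_div_iff₀ (by positivity)).mp (min_le_right _ _)
  refine ⟨ε, ε_pos, fun {Γ H _ _ _ _ ρ x U W} hU hW v hv hxv hUv hWv ↦ ?_⟩
  by_contra! no_fixed
  borelize (Fin (d + 1) → Circle)
  obtain ⟨Ψ, hΨ⟩ := exists_starAlgHom_torusChar ρ x
  obtain ⟨μ, _, hμ⟩ := exists_isSpectralMeasure Ψ v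
  have := hμ.isProbabilityMeasure hv
  have singleton_one : μ.real {1} = 0 := measureReal_singleton_one_eq_zero hΨ hμ fun w ↦ by
    contrapose!
    exact no_fixed w
  have box_le : μ.real (torusBox (Fin (d + 1)) r) ≤ 1 / 2 :=
    hμ.measureReal_torusBox_le hd hv singleton_one r_le_one hr (isCovariant_torusMap hΨ hU)
      (isCovariant_torusMap hΨ hW) ε_mul_le hUv hWv
  have compl_le : μ.real (torusBox (Fin (d + 1)) r)ᶜ ≤ 1 / 4 :=
    measureReal_compl_torusBox_le hΨ hμ δ_pos hδ ε_pos.le (by simpa using ε_mul_le_δ) hxv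
  linarith [probReal_add_probReal_compl (μ := μ)
    (isClosed_torusBox (ι := Fin (d + 1)) r).measurableSet]

end FixedVectors

section Criterion

/-- Relative property (T) of the pair `(G, N)`, tested on the unitary representations of `G` on
Hilbert spaces in the universe `w`; unitary operators are encoded as linear isometric
equivalences. -/
def HasRelativePropertyT.{w} {G : Type*} [Group G] (N : Subgroup G) : Prop :=
  ∃ (S : Finset G) (ε : ℝ), 0 < ε ∧
    ∀ (V : Type w) [NormedAddCommGroup V] [InnerProductSpace ℂ V] [CompleteSpace V]
      (π : G →* (V ≃ₗᵢ[ℂ] V)), (∃ v : V, ‖v‖ = 1 ∧ ∀ s ∈ S, ‖π s v - v‖ < ε) →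
        ∃ v : V, v ≠ 0 ∧ ∀ x ∈ N, π x v = v

theorem forall_apply_eq_of_closure_eq_top {Γ R V : Type*} [Group Γ] [Semiring R]
    [SeminormedAddCommGroup V] [Module R V] {π : Γ →* (V ≃ₗᵢ[R] V)}
    {s : Set Γ} (hs : Subgroup.closure s = ⊤)
    {v : V} (hv : ∀ x ∈ s, π x v = v) (x : Γ) : π x v = v := by
  induction (hs ▸ Subgroup.mem_top x : x ∈ Subgroup.closure s) using
    Subgroup.closure_induction with
  | mem x hx => exact hv x hx
  | one => rw [map_one, LinearIsometryEquiv.coe_one, id_eq]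
  | mul x y _ _ hx hy => rw [map_mul, LinearIsometryEquiv.coe_mul, Function.comp_apply, hy, hx]
  | inv x _ hx =>
    rw [map_inv]
    exact (π x).symm_apply_eq.mpr hx.symm

universe u w

theorem hasRelativePropertyT_range_inl {d : ℕ} (hd : d ≠ 0) {Γ : Type u} {G : Type*} [CommGroup Γ]
    [Group G] {φ : G →* MulAut Γ} {x : Fin (d + 1) → Γ}
    (hx : Subgroup.closure (Set.range x) = ⊤) {g h : G}
    (hg : ∀ i, φ g (x i) = zpowProd x (unipotentMatrix d i))
    (hh : ∀ i, φ h (x i) = zpowProd x (weylMatrix d i)) :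
    HasRelativePropertyT.{w} (SemidirectProduct.inl : Γ →* Γ ⋊[φ] G).range := by
  classical
  obtain ⟨ε, ε_pos, exists_fixed⟩ := exists_forall_exists_ne_zero_fixed.{u, w} hd
  refine ⟨Finset.univ.image (fun i ↦ .inl (x i)) ∪ {.inr g, .inr h}, ε, ε_pos, ?_⟩
  rintro V _ _ _ π ⟨v, hv, almost_fixed⟩
  let σ : Γ ⋊[φ] G →* unitary (V →L[ℂ] V) := Unitary.linearIsometryEquiv.symm.toMonoidHom.comp π
  have conj_eq (k : G) (y : Γ) :
      σ (.inr k) * σ.comp SemidirectProduct.inl y * (σ (.inr k))⁻¹ =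
        σ.comp SemidirectProduct.inl (φ k y) := by
    simp only [MonoidHom.comp_apply, SemidirectProduct.inl_aut, map_mul, map_inv]
  obtain ⟨w, w_ne_zero, hw⟩ := exists_fixed (ρ := σ.comp SemidirectProduct.inl) (x := x)
    (fun i ↦ by rw [conj_eq, hg]) (fun i ↦ by rw [conj_eq, hh]) hv
    (fun i ↦ (almost_fixed (.inl (x i)) (by simp)).le)
    (almost_fixed (.inr g) (by simp)).le (almost_fixed (.inr h) (by simp)).le
  refine ⟨w, w_ne_zero, ?_⟩
  rintro _ ⟨y, rfl⟩
  exact forall_apply_eq_of_closure_eq_top (π := π.comp SemidirectProduct.inl) hx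
    (Set.forall_mem_range.mpr hw) y

end Criterion

section BinaryForms

open MvPolynomial

/-- The monomial `X ^ i * Y ^ (d - i)`, as an element of `V_{d+1}(ℤ)`. -/
noncomputable def binaryMonomial (d : ℕ) (i : Fin (d + 1)) : VnZ (d + 1) :=
  ⟨X 0 ^ (i : ℕ) * X 1 ^ (d - i : ℕ), by
    have homogeneous := ((isHomogeneous_X ℤ (0 : Fin 2)).pow i).mul
      ((isHomogeneous_X ℤ (1 : Fin 2)).pow (d - i))
    rwa [one_mul, one_mul, Nat.add_sub_of_le i.is_le] at homogeneous⟩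

theorem coe_binaryMonomial {d : ℕ} (i : Fin (d + 1)) :
    (binaryMonomial d i : MvPolynomial (Fin 2) ℤ) = X 0 ^ (i : ℕ) * X 1 ^ (d - i : ℕ) :=
  rfl

theorem exists_monomial_eq_smul_binaryMonomial {d : ℕ} (P : VnZ (d + 1)) {s : Fin 2 →₀ ℕ}
    (hs : s ∈ P.1.support) :
    ∃ i, monomial s (coeff s P.1) = coeff s P.1 • (binaryMonomial d i).1 := by
  have degree_eq : s 0 + s 1 = d := by
    have weight_eq := P.2 (mem_support_iff.mp hs)
    rwa [Finsupp.weight_apply, Finsupp.sum_fintype _ _ (by simp), Fin.sum_univ_two,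
      Pi.one_apply, Pi.one_apply, smul_eq_mul, smul_eq_mul, mul_one, mul_one] at weight_eq
  refine ⟨⟨s 0, by omega⟩, ?_⟩
  rw [coe_binaryMonomial, ← Nat.eq_sub_of_add_eq' degree_eq, monomial_eq,
    Finsupp.prod_fintype _ _ (by simp), Fin.prod_univ_two, smul_eq_C_mul]

theorem closure_range_binaryMonomial (d : ℕ) :
    AddSubgroup.closure (Set.range (binaryMonomial d)) = ⊤ := by
  refine eq_top_iff.mpr fun P _ ↦ ?_
  choose! index hindex using fun s ↦ exists_monomial_eq_smul_binaryMonomial P (s := s)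
  have eq_sum : P = ∑ s ∈ P.1.support, coeff s P.1 • binaryMonomial d (index s) := by
    refine Subtype.ext (P.1.as_sum.trans ?_)
    rw [AddSubmonoidClass.coe_finsetSum]
    exact Finset.sum_congr rfl hindex
  rw [eq_sum]
  exact sum_mem fun s _ ↦ zsmul_mem (AddSubgroup.subset_closure (Set.mem_range_self _)) _

theorem closure_range_ofAdd_binaryMonomial (d : ℕ) :
    Subgroup.closure (Set.range fun i ↦ Multiplicative.ofAdd (binaryMonomial d i)) = ⊤ := by
  rw [Set.range_comp', Equiv.image_eq_preimage_symm, Multiplicative.ofAdd_symm_eq,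
    ← AddSubgroup.toSubgroup_closure, closure_range_binaryMonomial, map_top]

theorem coe_zpowProd_binaryMonomial {d : ℕ} (c : Fin (d + 1) → ℤ) :
    ((zpowProd (fun j ↦ .ofAdd (binaryMonomial d j)) c : Multiplicative (VnZ (d + 1))).toAdd :
      MvPolynomial (Fin 2) ℤ) = ∑ j, c j • (X 0 ^ (j : ℕ) * X 1 ^ (d - j : ℕ)) := by
  rw [zpowProd, toAdd_prod, AddSubmonoidClass.coe_finsetSum]
  rfl

theorem pow_mul_add_pow_eq_sum_unipotentMatrix {R : Type*} [CommRing R] (a b : R) {d : ℕ}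
    (i : Fin (d + 1)) :
    a ^ (i : ℕ) * (a + b) ^ (d - i : ℕ) =
      ∑ j, unipotentMatrix d i j • (a ^ (j : ℕ) * b ^ (d - j : ℕ)) := by
  simp only [unipotentMatrix, Matrix.of_apply, natCast_zsmul]
  rw [Fin.sum_univ_eq_sum_range fun j ↦ (d - i : ℕ).choose (d - j) • (a ^ j * b ^ (d - j)),
    Finset.range_eq_Ico, ← Finset.sum_Ico_consecutive _ (Nat.zero_le i) i.is_lt.le,
    Finset.sum_Ico_eq_sum_range _ _ (d + 1), Nat.sub_add_comm i.is_le,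
    Finset.sum_eq_zero fun j hj ↦ ?_, zero_add, add_pow, Finset.mul_sum]
  · refine Finset.sum_congr rfl fun k hk ↦ ?_
    have k_le : k ≤ d - i := Finset.mem_range_succ_iff.mp hk
    rw [← Nat.sub_sub, Nat.choose_symm k_le, nsmul_eq_mul]
    ring
  · have j_lt : j < i := (Finset.mem_Ico.mp hj).2
    rw [Nat.choose_eq_zero_of_lt (by omega), zero_smul]

theorem pow_mul_neg_pow_eq_sum_weylMatrix {R : Type*} [CommRing R] (a b : R) {d : ℕ}
    (i : Fin (d + 1)) :
    b ^ (i : ℕ) * (-a) ^ (d - i : ℕ) =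
      ∑ j, weylMatrix d i j • (a ^ (j : ℕ) * b ^ (d - j : ℕ)) := by
  rw [Finset.sum_eq_single i.rev (fun j _ hj ↦ by simp [weylMatrix, hj]) (by simp)]
  have val_rev : (i.rev : ℕ) = d - i := by rw [Fin.val_rev]; omega
  simp only [weylMatrix, Matrix.of_apply, if_true, val_rev, Nat.sub_sub_self i.is_le,
    zsmul_eq_mul]
  rw [neg_pow]
  push_cast
  ring

/-- `φ` is the action of `SL₂(ℤ)` on `V_n(ℤ)` by linear substitution. -/
def IsLinearSubstitution {n : ℕ}
    (φ : Matrix.SpecialLinearGroup (Fin 2) ℤ →* MulAut (Multiplicative (VnZ n))) : Prop :=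
  ∀ (g : Matrix.SpecialLinearGroup (Fin 2) ℤ) (P : VnZ n),
    ((φ g (.ofAdd P)).toAdd : MvPolynomial (Fin 2) ℤ) =
      aeval (fun i ↦ ∑ j, C (g j i) * X j) (P : MvPolynomial (Fin 2) ℤ)

variable {d : ℕ}
  {φ : Matrix.SpecialLinearGroup (Fin 2) ℤ →* MulAut (Multiplicative (VnZ (d + 1)))}

theorem IsLinearSubstitution.apply_T (hφ : IsLinearSubstitution φ) (i : Fin (d + 1)) :
    φ ModularGroup.T (.ofAdd (binaryMonomial d i)) =
      zpowProd (fun j ↦ .ofAdd (binaryMonomial d j)) (unipotentMatrix d i) := by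
  refine Multiplicative.toAdd.injective (Subtype.ext ?_)
  rw [hφ, coe_zpowProd_binaryMonomial, ← pow_mul_add_pow_eq_sum_unipotentMatrix]
  simp [coe_binaryMonomial, ModularGroup.T, Fin.sum_univ_two]

theorem IsLinearSubstitution.apply_S (hφ : IsLinearSubstitution φ) (i : Fin (d + 1)) :
    φ ModularGroup.S (.ofAdd (binaryMonomial d i)) =
      zpowProd (fun j ↦ .ofAdd (binaryMonomial d j)) (weylMatrix d i) := by
  refine Multiplicative.toAdd.injective (Subtype.ext ?_)
  rw [hφ, coe_zpowProd_binaryMonomial, ← pow_mul_neg_pow_eq_sum_weylMatrix]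
  simp [coe_binaryMonomial, ModularGroup.S, Fin.sum_univ_two]

theorem IsLinearSubstitution.hasRelativePropertyT.{w} (hd : d ≠ 0) (hφ : IsLinearSubstitution φ) :
    HasRelativePropertyT.{w} (SemidirectProduct.inl : Multiplicative (VnZ (d + 1)) →*
      Multiplicative (VnZ (d + 1)) ⋊[φ] Matrix.SpecialLinearGroup (Fin 2) ℤ).range :=
  hasRelativePropertyT_range_inl hd (closure_range_ofAdd_binaryMonomial d) hφ.apply_T hφ.apply_S

end BinaryForms

end RelativeT

/-- relative property (T) for (SL₂(ℤ) ⋉ V_n(ℤ), V_n(ℤ)), n ≥ 2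
(Lemma A.3). -/
theorem stmt_16 (n : ℕ) (hn : 2 ≤ n)
    (φ : Matrix.SpecialLinearGroup (Fin 2) ℤ →* MulAut (Multiplicative ↥(VnZ n)))
    -- φ is the action of SL₂(ℤ) on V_n(ℤ) by linear substitution
    (hφ : ∀ (g : Matrix.SpecialLinearGroup (Fin 2) ℤ) (P : ↥(VnZ n)),
      ((Multiplicative.toAdd (φ g (Multiplicative.ofAdd P)) : ↥(VnZ n))
          : MvPolynomial (Fin 2) ℤ)
        = MvPolynomial.aeval
            (fun i : Fin 2 => ∑ j : Fin 2,
              MvPolynomial.C ((g : Matrix (Fin 2) (Fin 2) ℤ) j i) * MvPolynomial.X j)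
            (P : MvPolynomial (Fin 2) ℤ)) :
    -- the pair (SL₂(ℤ) ⋉ V_n(ℤ), V_n(ℤ)) has relative property (T)
    ∃ (S : Finset (Multiplicative ↥(VnZ n) ⋊[φ] Matrix.SpecialLinearGroup (Fin 2) ℤ))
      (ε : ℝ), 0 < ε ∧
      ∀ (V : Type) [NormedAddCommGroup V] [InnerProductSpace ℂ V] [CompleteSpace V],
        ∀ (π : (Multiplicative ↥(VnZ n) ⋊[φ] Matrix.SpecialLinearGroup (Fin 2) ℤ) →*
            (V ≃ₗᵢ[ℂ] V)),
          (∃ v : V, ‖v‖ = 1 ∧ ∀ s ∈ S, ‖π s v - v‖ < ε) →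
          ∃ v : V, v ≠ 0 ∧
            ∀ x : Multiplicative ↥(VnZ n), π (SemidirectProduct.inl x) v = v := by
  obtain ⟨d, rfl⟩ := Nat.exists_eq_add_of_le' (one_le_two.trans hn)
  obtain ⟨S, ε, ε_pos, exists_fixed⟩ :=
    RelativeT.IsLinearSubstitution.hasRelativePropertyT.{0} (by omega) hφ
  refine ⟨S, ε, ε_pos, fun V _ _ _ π almost_fixed ↦ ?_⟩
  obtain ⟨v, v_ne_zero, hv⟩ := exists_fixed V π almost_fixed
  exact ⟨v, v_ne_zero, fun x ↦ hv _ ⟨x, rfl⟩⟩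
end
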